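/- arXiv:1702.08258 — 4 statements merged into one kernel-verified Lean document; each statement's English description precedes it below -/
import Mathlib

section
/- Let m, m_t, m_r be positive integers with m_t ≤ m_r and m_t + m_r ≤ m. Then for every s ≥ 0, the ergodic capacity of the MIMO Jacobi fading channel satisfies the lower bound E[ln det(I_{m_t} + s·HᴴH)] ≥ m_t · ln(1 + s · exp( −(1/m_t) · Σ_{j=0}^{m_t−1} Σ_{k=0}^{m−m_r−1} 1/(m_r + k − j) )), where the expectation is over the Haar probability measure on the unitary group U(m). -/
open MeasureTheory Matrix

/-- Borel measurable-space structure on the unitary group `U(m)`. -/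
noncomputable instance (m : ℕ) : MeasurableSpace (Matrix.unitaryGroup (Fin m) ℂ) := borel _

instance (m : ℕ) : BorelSpace (Matrix.unitaryGroup (Fin m) ℂ) := ⟨rfl⟩

/-- The MIMO Jacobi fading channel matrix: the upper-left `mr × mt` block of a
unitary `m × m` matrix `U`. -/
noncomputable def jacobiH (m mt mr : ℕ) (hr : mr ≤ m) (ht : mt ≤ m)
    (U : Matrix.unitaryGroup (Fin m) ℂ) : Matrix (Fin mr) (Fin mt) ℂ :=
  (U : Matrix (Fin m) (Fin m) ℂ).submatrix (Fin.castLE hr) (Fin.castLE ht)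

/-- The ergodic capacity `E[ln det (I + s · Hᴴ H)]` of the MIMO Jacobi fading channel,
the expectation being taken with respect to the measure `μ` on the unitary group. -/
noncomputable def ergodicCapacity (m mt mr : ℕ) (hr : mr ≤ m) (ht : mt ≤ m) (s : ℝ)
    (μ : Measure (Matrix.unitaryGroup (Fin m) ℂ)) : ℝ :=
  ∫ U, Real.log ((Matrix.det ((1 : Matrix (Fin mt) (Fin mt) ℂ) +
      (s : ℂ) • ((jacobiH m mt mr hr ht U)ᴴ * jacobiH m mt mr hr ht U))).re) ∂μ

namespace JacobiCap

open Filter Topology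
open scoped ENNReal

abbrev UG (m : ℕ) := Matrix.unitaryGroup (Fin m) ℂ

instance secondCountable_UG (m : ℕ) : SecondCountableTopology (UG m) :=
  inferInstanceAs (SecondCountableTopology {x : Fin m → Fin m → ℂ // x ∈ Matrix.unitaryGroup (Fin m) ℂ})

instance compactSpace_UG (m : ℕ) : CompactSpace (UG m) := by
  have hc : IsCompact (Set.univ.pi (fun _ : Fin m => Set.univ.pi (fun _ : Fin m => Metric.closedBall (0:ℂ) 1))) :=
    isCompact_univ_pi fun _ => isCompact_univ_pi fun _ => isCompact_closedBall _ _
  have hcl : IsClosed ((Matrix.unitaryGroup (Fin m) ℂ : Set (Matrix (Fin m) (Fin m) ℂ))) := by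
    have : (Matrix.unitaryGroup (Fin m) ℂ : Set (Matrix (Fin m) (Fin m) ℂ)) = {A | A * star A = 1} := by
      ext A; exact Matrix.mem_unitaryGroup_iff
    rw [this]
    exact isClosed_eq (by fun_prop) continuous_const
  have : IsCompact ((Matrix.unitaryGroup (Fin m) ℂ : Set (Matrix (Fin m) (Fin m) ℂ))) := by
    refine IsCompact.of_isClosed_subset hc hcl ?_
    intro A hA i _ j _
    simpa using entry_norm_bound_of_unitary hA i j
  exact isCompact_iff_compactSpace.mp this

noncomputable def haarU (p : ℕ) : Measure (UG p) := Measure.haarMeasure ⊤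

instance (p : ℕ) : (haarU p).IsHaarMeasure := by unfold haarU; infer_instance
instance (p : ℕ) : IsProbabilityMeasure (haarU p) := ⟨by
  have := Measure.haarMeasure_self (G := UG p) (K₀ := ⊤)
  simpa [haarU] using this⟩

theorem lintegral_inv_UG {m : ℕ} (μ : Measure (UG m)) [μ.IsHaarMeasure] [IsProbabilityMeasure μ]
    {f : UG m → ℝ≥0∞} (hf : Measurable f) : ∫⁻ U, f U⁻¹ ∂μ = ∫⁻ U, f U ∂μ := by
  have h1 : ∫⁻ U, ∫⁻ V, f (U⁻¹ * V) ∂μ ∂μ = ∫⁻ V, f V ∂μ := by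
    simp_rw [lintegral_mul_left_eq_self f]
    simp
  have h2 : ∫⁻ V, ∫⁻ U, f (U⁻¹ * V) ∂μ ∂μ = ∫⁻ U, f U⁻¹ ∂μ := by
    have : ∀ V, ∫⁻ U, f (U⁻¹ * V) ∂μ = ∫⁻ U, f U⁻¹ ∂μ := by
      intro V
      rw [← lintegral_mul_left_eq_self (fun U => f (U⁻¹ * V)) V]
      simp
    simp_rw [this]
    simp
  rw [← h1, ← h2, lintegral_lintegral_swap]
  exact Measurable.aemeasurable (by fun_prop)

theorem lintegral_mul_right_UG {m : ℕ} (μ : Measure (UG m)) [μ.IsHaarMeasure] [IsProbabilityMeasure μ]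
    {f : UG m → ℝ≥0∞} (hf : Measurable f) (W : UG m) : ∫⁻ U, f (U * W) ∂μ = ∫⁻ U, f U ∂μ := by
  rw [← lintegral_inv_UG μ (f := fun U => f (U * W)) (by fun_prop), ← lintegral_inv_UG μ hf,
    ← lintegral_mul_left_eq_self _ W]
  simp

/-- minus log, with value `⊤` at nonpositive reals, truncated at `0` -/
noncomputable def N (t : ℝ) : ℝ≥0∞ := if t ≤ 0 then ⊤ else ENNReal.ofReal (-Real.log t)

theorem measurable_N : Measurable N := by
  unfold N
  exact Measurable.ite measurableSet_Iic measurable_const (by fun_prop)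

theorem N_one : N 1 = 0 := by simp [N]

theorem N_mul_le {a b : ℝ} (ha : 0 ≤ a) (hb : 0 ≤ b) : N (a * b) ≤ N a + N b := by
  rcases ha.eq_or_lt with rfl | ha
  · simp [N]
  rcases hb.eq_or_lt with rfl | hb
  · simp [N]
  have hab := mul_pos ha hb
  simp only [N, not_le.2 ha, not_le.2 hb, not_le.2 hab, if_false]
  rw [Real.log_mul ha.ne' hb.ne', neg_add]
  exact ENNReal.ofReal_add_le

/-- embedding matrix -/
def emb {p m : ℕ} (f : Fin p → Fin m) : Matrix (Fin m) (Fin p) ℂ :=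
  (1 : Matrix (Fin m) (Fin m) ℂ).submatrix id f

theorem emb_star_mul {p m n : ℕ} (f : Fin p → Fin m) (A : Matrix (Fin m) (Fin n) ℂ) :
    (emb f)ᴴ * A = A.submatrix f id := by
  ext i j
  simp [emb, Matrix.mul_apply, Matrix.one_apply]

theorem emb_star_emb {p m : ℕ} {f : Fin p → Fin m} (hf : Function.Injective f) :
    (emb f)ᴴ * emb f = 1 := by
  rw [emb_star_mul]
  ext i j
  simp [emb, Matrix.one_apply, hf.eq_iff]

/-- block embedding of `U(p)` in `U(m)` -/
noncomputable def blk {p m : ℕ} {f : Fin p → Fin m} (hf : Function.Injective f) (V : UG p) : UG m :=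
  ⟨1 + emb f * ((V : Matrix (Fin p) (Fin p) ℂ) - 1) * (emb f)ᴴ, by
    rw [Matrix.mem_unitaryGroup_iff']
    have hV := Matrix.mem_unitaryGroup_iff'.1 V.2
    rw [Matrix.star_eq_conjTranspose] at *
    have h := emb_star_emb hf
    set F := emb f
    set v := (V : Matrix (Fin p) (Fin p) ℂ)
    have e1 : (1 + F * (v - 1) * Fᴴ)ᴴ = 1 + F * (vᴴ - 1) * Fᴴ := by
      simp [Matrix.conjTranspose_mul, Matrix.mul_assoc]
    have e2 : F * (vᴴ - 1) * Fᴴ * (F * (v - 1) * Fᴴ) = F * ((vᴴ - 1) * (v - 1)) * Fᴴ := by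
      simp only [Matrix.mul_assoc]
      rw [← Matrix.mul_assoc Fᴴ F, h, Matrix.one_mul]
    have e3 : (vᴴ - 1) * (v - 1) = -(vᴴ - 1) - (v - 1) := by
      rw [sub_mul, mul_sub, hV]; simp
    rw [e1, add_mul, mul_add, mul_add, e2, e3]
    simp only [Matrix.mul_sub, Matrix.sub_mul, Matrix.mul_neg, Matrix.neg_mul, mul_one, one_mul]
    abel⟩

theorem blk_continuous {p m : ℕ} {f : Fin p → Fin m} (hf : Function.Injective f) :
    Continuous (blk hf) := by
  unfold blk
  fun_prop

theorem blk_mul {p m : ℕ} {f : Fin p → Fin m} (hf : Function.Injective f) (V : UG p) (U : UG m) :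
    ((blk hf V * U : UG m) : Matrix (Fin m) (Fin m) ℂ).submatrix f id =
      (V : Matrix (Fin p) (Fin p) ℂ) * (U : Matrix (Fin m) (Fin m) ℂ).submatrix f id := by
  rw [← emb_star_mul, ← emb_star_mul]
  simp only [blk, Submonoid.coe_mul]
  rw [Matrix.add_mul, Matrix.mul_add]
  simp only [Matrix.mul_assoc]
  rw [← Matrix.mul_assoc (emb f)ᴴ (emb f), emb_star_emb hf]
  simp [Matrix.sub_mul]

theorem blk_mul_apply {p m : ℕ} {f : Fin p → Fin m} (hf : Function.Injective f) (V : UG p) (U : UG m)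
    (i : Fin p) (j : Fin m) :
    ((blk hf V * U : UG m) : Matrix (Fin m) (Fin m) ℂ) (f i) j =
      ∑ k, (V : Matrix (Fin p) (Fin p) ℂ) i k * (U : Matrix (Fin m) (Fin m) ℂ) (f k) j := by
  have := congrFun (congrFun (blk_mul hf V U) i) j
  simpa [Matrix.mul_apply] using this

theorem integrable_cont {m : ℕ} (μ : Measure (UG m)) [IsFiniteMeasure μ] {E : Type*} [NormedAddCommGroup E]
    [SecondCountableTopology E]
    {f : UG m → E} (hf : Continuous f) : Integrable f μ := by
  borelize E
  obtain ⟨C, hC⟩ := isCompact_univ.exists_bound_of_continuousOn hf.continuousOn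
  exact Integrable.of_bound hf.aestronglyMeasurable C (ae_of_all _ fun x => hC x trivial)

theorem continuous_entry {m : ℕ} (i j : Fin m) :
    Continuous (fun U : UG m => (U : Matrix (Fin m) (Fin m) ℂ) i j) := by
  exact (continuous_subtype_val).matrix_elem i j

noncomputable def rot (θ : ℝ) : UG 2 := ⟨!![(Real.cos θ : ℂ), (Real.sin θ : ℂ); -(Real.sin θ : ℂ), (Real.cos θ : ℂ)], by
  rw [Matrix.mem_unitaryGroup_iff, Matrix.star_eq_conjTranspose]
  have h : ((Real.cos θ : ℝ) : ℂ) ^ 2 + ((Real.sin θ : ℝ) : ℂ) ^ 2 = 1 := by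
    norm_cast; exact Real.cos_sq_add_sin_sq θ
  ext i j
  fin_cases i <;> fin_cases j <;>
    simp only [Matrix.mul_apply, Fin.sum_univ_two, Matrix.conjTranspose_apply] <;>
    simp [-Complex.ofReal_cos, -Complex.ofReal_sin, Complex.conj_ofReal] <;> first | ring1 | linear_combination h⟩

noncomputable def phs : UG 2 := ⟨!![1, 0; 0, Complex.I], by
  rw [Matrix.mem_unitaryGroup_iff, Matrix.star_eq_conjTranspose]
  ext i j
  fin_cases i <;> fin_cases j <;>
    simp only [Matrix.mul_apply, Fin.sum_univ_two, Matrix.conjTranspose_apply] <;>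
    simp⟩

theorem inj_pair {p : ℕ} {a b : Fin p} (h : a ≠ b) : Function.Injective ![a, b] := by
  intro x y hxy
  fin_cases x <;> fin_cases y <;> simp_all [eq_comm]

set_option maxHeartbeats 2000000 in
theorem moment_aux {p : ℕ} (μ : Measure (UG p)) [μ.IsHaarMeasure] [IsProbabilityMeasure μ]
    {a b : Fin p} (hab : a ≠ b) (c : Fin p) (j : ℕ) :
    ((j : ℝ) + 1) * ∫ U : UG p, ‖U.1 a c‖ ^ (2 * j) * ‖U.1 b c‖ ^ 2 ∂μ = ∫ U : UG p, ‖U.1 a c‖ ^ (2 * (j + 1)) ∂μ := by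
  have hf := inj_pair hab
  have ca := continuous_entry a c
  have cb := continuous_entry b c
  have cont : ∀ g : ℂ → ℂ → ℂ, Continuous (fun q : ℂ × ℂ => g q.1 q.2) →
      Continuous (fun U : UG p => g (U.1 a c) (U.1 b c)) := fun g hg => hg.comp (ca.prodMk cb)
  let R : ℝ → UG p → UG p := fun θ U => blk hf (rot θ) * U
  have Za : ∀ θ U, (R θ U).1 a c = Real.cos θ * U.1 a c + Real.sin θ * U.1 b c := by
    intro θ U
    have := blk_mul_apply hf (rot θ) U 0 c
    rw [Fin.sum_univ_two] at this
    exact this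
  have Zb : ∀ θ U, (R θ U).1 b c = -Real.sin θ * U.1 a c + Real.cos θ * U.1 b c := by
    intro θ U
    have := blk_mul_apply hf (rot θ) U 1 c
    rw [Fin.sum_univ_two] at this
    exact this
  have dZa : ∀ U θ, HasDerivAt (fun θ => (R θ U).1 a c) ((R θ U).1 b c) θ := by
    intro U θ
    simp_rw [Za, Zb]
    have h1 := ((Real.hasDerivAt_cos θ).ofReal_comp.mul_const (U.1 a c)).add
      ((Real.hasDerivAt_sin θ).ofReal_comp.mul_const (U.1 b c))
    exact h1.congr_deriv (by push_cast; ring)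
  have dZb : ∀ U θ, HasDerivAt (fun θ => (R θ U).1 b c) (-(R θ U).1 a c) θ := by
    intro U θ
    simp_rw [Za, Zb]
    have h1 := ((Real.hasDerivAt_sin θ).ofReal_comp.neg.mul_const (U.1 a c)).add
      ((Real.hasDerivAt_cos θ).ofReal_comp.mul_const (U.1 b c))
    exact h1.congr_deriv (by push_cast; ring)
  let Φ : UG p → ℂ := fun U => U.1 a c ^ (j + 1) * star (U.1 a c) ^ j * star (U.1 b c)
  let X : UG p → ℂ := fun U => (j : ℂ) * (U.1 a c ^ (j + 1) * star (U.1 a c) ^ (j - 1) * star (U.1 b c) ^ 2)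
  let Ψ : UG p → ℂ := fun U => ((j : ℂ) + 1) * (U.1 a c ^ j * star (U.1 a c) ^ j * (U.1 b c * star (U.1 b c)))
    + X U - U.1 a c ^ (j + 1) * star (U.1 a c) ^ (j + 1)
  have cΦ : Continuous Φ := cont (fun z w => z ^ (j + 1) * star z ^ j * star w) (by fun_prop)
  have cX : Continuous X := cont (fun z w => (j : ℂ) * (z ^ (j + 1) * star z ^ (j - 1) * star w ^ 2)) (by fun_prop)
  have c1 : Continuous (fun U : UG p => ((j : ℂ) + 1) * (U.1 a c ^ j * star (U.1 a c) ^ j * (U.1 b c * star (U.1 b c)))) :=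
    cont (fun z w => ((j : ℂ) + 1) * (z ^ j * star z ^ j * (w * star w))) (by fun_prop)
  have c3 : Continuous (fun U : UG p => U.1 a c ^ (j + 1) * star (U.1 a c) ^ (j + 1)) :=
    cont (fun z w => z ^ (j + 1) * star z ^ (j + 1)) (by fun_prop)
  have cΨ : Continuous Ψ := (c1.add cX).sub c3
  have cR : ∀ θ, Continuous (R θ) := fun θ => continuous_const.mul continuous_id
  have dΦ : ∀ U θ, HasDerivAt (fun θ => Φ (R θ U)) (Ψ (R θ U)) θ := by
    intro U θ
    have h := (((dZa U θ).pow (j + 1)).mul ((dZa U θ).star.pow j)).mul (dZb U θ).star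
    refine h.congr_deriv ?_
    simp only [Ψ, X, Pi.mul_apply, Pi.pow_apply]
    push_cast
    simp only [star_neg, Nat.add_sub_cancel]
    ring
  obtain ⟨C, hC⟩ := isCompact_univ.exists_bound_of_continuousOn cΨ.continuousOn
  have key := hasDerivAt_integral_of_dominated_loc_of_deriv_le (μ := μ) (F := fun θ U => Φ (R θ U))
    (F' := fun θ U => Ψ (R θ U)) (x₀ := (0:ℝ)) (s := Set.univ) (bound := fun _ => C) univ_mem
    (Eventually.of_forall fun θ => (cΦ.comp (cR _)).aestronglyMeasurable)
    (integrable_cont μ (cΦ.comp (cR _)))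
    ((cΨ.comp (cR _)).aestronglyMeasurable)
    (ae_of_all _ fun U θ _ => hC _ trivial) (integrable_const C)
    (ae_of_all _ fun U θ _ => dΦ U θ)
  have hconst : (fun θ : ℝ => ∫ U, Φ (R θ U) ∂μ) = fun _ => ∫ U, Φ U ∂μ := by
    funext θ
    exact integral_mul_left_eq_self Φ _
  have hz : ∫ U, Ψ (R 0 U) ∂μ = 0 := by
    have h2 := key.2
    rw [hconst] at h2
    exact h2.unique (hasDerivAt_const _ _)
  have hz' : ∫ U, Ψ U ∂μ = 0 := by rw [← hz]; exact (integral_mul_left_eq_self Ψ _).symm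
  have hX : ∫ U, X U ∂μ = 0 := by
    have h1 := integral_mul_left_eq_self (μ := μ) X (blk hf phs)
    have h2 : ∀ U, X (blk hf phs * U) = - X U := by
      intro U
      have e0 : (blk hf phs * U).1 a c = U.1 a c := by
        have e0 := blk_mul_apply hf phs U 0 c
        rw [Fin.sum_univ_two] at e0
        refine e0.trans ?_
        simp [phs]
      have e1 : (blk hf phs * U).1 b c = Complex.I * U.1 b c := by
        have e0 := blk_mul_apply hf phs U 1 c
        rw [Fin.sum_univ_two] at e0
        refine e0.trans ?_
        simp [phs]
      simp only [X]
      rw [e0, e1]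
      have : star (Complex.I * U.1 b c) ^ 2 = - star (U.1 b c) ^ 2 := by
        rw [star_mul, mul_pow]; simp
      rw [this]; ring
    simp_rw [h2] at h1
    rw [integral_neg] at h1
    have : (2:ℂ) * ∫ U, X U ∂μ = 0 := by linear_combination -h1
    simpa using this
  have i1 : Integrable (fun U : UG p => ((j : ℂ) + 1) * (U.1 a c ^ j * star (U.1 a c) ^ j * (U.1 b c * star (U.1 b c)))) μ :=
    integrable_cont μ c1
  have i2 : Integrable X μ := integrable_cont μ cX
  have i3 : Integrable (fun U : UG p => U.1 a c ^ (j + 1) * star (U.1 a c) ^ (j + 1)) μ :=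
    integrable_cont μ c3
  have hz2 := integral_sub (i1.add i2) i3
  have hz3 := integral_add i1 i2
  have hz4 := hz2.symm.trans hz'
  erw [hz3, hX] at hz4
  rw [integral_const_mul] at hz4
  replace hz' := hz4
  have s1 : ∀ (z : ℂ) (k : ℕ), z ^ k * star z ^ k = ((‖z‖ ^ (2 * k) : ℝ) : ℂ) := by
    intro z k
    rw [← mul_pow, pow_mul]
    push_cast
    congr 1
    exact Complex.mul_conj' z
  have s2 : ∀ (z : ℂ), z * star z = ((‖z‖ ^ 2 : ℝ) : ℂ) := by
    intro z; simpa using s1 z 1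
  simp_rw [s1, s2] at hz'
  have : ((((j : ℝ) + 1) * ∫ U : UG p, ‖U.1 a c‖ ^ (2 * j) * ‖U.1 b c‖ ^ 2 ∂μ : ℝ) : ℂ) = ((∫ U : UG p, ‖U.1 a c‖ ^ (2 * (j + 1)) ∂μ : ℝ) : ℂ) := by
    rw [Complex.ofReal_mul, ← integral_complex_ofReal, ← integral_complex_ofReal]
    push_cast at hz' ⊢
    linear_combination hz'
  exact_mod_cast this
theorem col_sum {p : ℕ} (U : UG p) (c : Fin p) : ∑ b, ‖U.1 b c‖ ^ 2 = 1 := by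
  have h := Matrix.mem_unitaryGroup_iff'.1 U.2
  have h2 := congrFun (congrFun h c) c
  rw [Matrix.mul_apply] at h2
  simp only [Matrix.star_apply, Matrix.one_apply_eq] at h2
  have h3 : ∀ z : ℂ, star z * z = ((‖z‖ ^ 2 : ℝ) : ℂ) := fun z => by
    push_cast; exact Complex.conj_mul' z
  simp_rw [h3] at h2
  exact_mod_cast h2

theorem moment_rec {k : ℕ} (μ : Measure (UG (k + 1))) [μ.IsHaarMeasure] [IsProbabilityMeasure μ]
    (a c : Fin (k + 1)) (j : ℕ) :
    ((j : ℝ) + 1) * (∫ U : UG (k + 1), ‖U.1 a c‖ ^ (2 * j) ∂μ - ∫ U : UG (k + 1), ‖U.1 a c‖ ^ (2 * (j + 1)) ∂μ)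
      = k * ∫ U : UG (k + 1), ‖U.1 a c‖ ^ (2 * (j + 1)) ∂μ := by
  have ca : Continuous (fun U : UG (k+1) => ‖U.1 a c‖) := (continuous_entry a c).norm
  have cb : ∀ b, Continuous (fun U : UG (k+1) => ‖U.1 b c‖) := fun b => (continuous_entry b c).norm
  have hpt : ∀ U : UG (k + 1), ∑ b ∈ Finset.univ.erase a, ‖U.1 a c‖ ^ (2 * j) * ‖U.1 b c‖ ^ 2 =
      ‖U.1 a c‖ ^ (2 * j) - ‖U.1 a c‖ ^ (2 * (j + 1)) := by
    intro U
    have h := col_sum U c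
    rw [← Finset.add_sum_erase _ _ (Finset.mem_univ a)] at h
    rw [← Finset.mul_sum, eq_sub_of_add_eq' h]
    ring
  have h1 : ∑ b ∈ Finset.univ.erase a, ((j : ℝ) + 1) * ∫ U : UG (k + 1), ‖U.1 a c‖ ^ (2 * j) * ‖U.1 b c‖ ^ 2 ∂μ
      = ∑ b ∈ Finset.univ.erase a, ∫ U : UG (k + 1), ‖U.1 a c‖ ^ (2 * (j + 1)) ∂μ :=
    Finset.sum_congr rfl fun b hb => moment_aux μ (Finset.ne_of_mem_erase hb).symm c j
  rw [← Finset.mul_sum, ← integral_finsetSum, Finset.sum_const, Finset.card_erase_of_mem (Finset.mem_univ _),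
    integral_congr_ae (ae_of_all _ hpt), integral_sub] at h1
  · simpa using h1
  · exact integrable_cont μ (ca.pow _)
  · exact integrable_cont μ (ca.pow _)
  · intro b _
    exact integrable_cont μ ((ca.pow _).mul ((cb b).pow _))

theorem N_le_liminf {t : ℝ} (h0 : 0 ≤ t) (h1 : t ≤ 1) :
    N (1 - t) ≤ liminf (fun n : ℕ => ENNReal.ofReal (∑ j ∈ Finset.range n, t ^ (j + 1) / ((j : ℝ) + 1))) atTop := by
  refine le_of_eq (Tendsto.liminf_eq ?_).symm
  rcases h1.eq_or_lt with rfl | h1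
  · simp only [N, sub_self, le_refl, if_true, one_pow]
    exact ENNReal.tendsto_ofReal_atTop.comp Real.tendsto_sum_range_one_div_nat_succ_atTop
  · have : ¬ (1 - t ≤ 0) := by linarith
    simp only [N, this, if_false]
    refine ENNReal.tendsto_ofReal ?_
    exact (Real.hasSum_pow_div_log_of_abs_lt_one (by rwa [abs_of_nonneg h0])).tendsto_sum_nat

theorem N_one_coord {k : ℕ} (hk : 0 < k) (μ : Measure (UG (k + 1))) [μ.IsHaarMeasure] [IsProbabilityMeasure μ]
    (a c : Fin (k + 1)) :
    ∫⁻ U : UG (k + 1), N (1 - ‖U.1 a c‖ ^ 2) ∂μ ≤ ENNReal.ofReal (1 / k) := by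
  have ca : Continuous (fun U : UG (k+1) => ‖U.1 a c‖) := (continuous_entry a c).norm
  have hk' : (0:ℝ) < k := by exact_mod_cast hk
  let f : ℕ → UG (k + 1) → ℝ := fun n U => ∑ j ∈ Finset.range n, (‖U.1 a c‖ ^ 2) ^ (j + 1) / ((j : ℝ) + 1)
  have cf : ∀ n, Continuous (f n) := fun n =>
    continuous_finsetSum _ fun j _ => ((ca.pow 2).pow (j+1)).div_const _
  have hb : ∀ U : UG (k+1), ‖U.1 a c‖ ^ 2 ≤ 1 := fun U =>
    pow_le_one₀ (norm_nonneg _) (entry_norm_bound_of_unitary U.2 a c)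
  let M : ℕ → ℝ := fun j => ∫ U : UG (k + 1), ‖U.1 a c‖ ^ (2 * j) ∂μ
  have hM : ∀ j, 0 ≤ M j := fun j => integral_nonneg fun U => by positivity
  have hM0 : M 0 = 1 := by simp [M]
  have hInt : ∀ n, ∫ U, f n U ∂μ ≤ 1 / k := by
    intro n
    have e : ∫ U, f n U ∂μ = ∑ j ∈ Finset.range n, (M j - M (j + 1)) / k := by
      rw [integral_finsetSum]
      · refine Finset.sum_congr rfl fun j _ => ?_
        rw [integral_div]
        have h := moment_rec μ a c j
        simp_rw [← pow_mul]
        rw [div_eq_div_iff (by positivity) hk'.ne']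
        simp only [M]
        linarith
      · intro j _
        exact integrable_cont μ (((ca.pow 2).pow (j+1)).div_const _)
    rw [e, ← Finset.sum_div, Finset.sum_range_sub', hM0]
    gcongr
    linarith [hM n]
  calc ∫⁻ U : UG (k + 1), N (1 - ‖U.1 a c‖ ^ 2) ∂μ
      ≤ ∫⁻ U : UG (k + 1), liminf (fun n => ENNReal.ofReal (f n U)) atTop ∂μ :=
        lintegral_mono fun U => N_le_liminf (by positivity) (hb U)
    _ ≤ liminf (fun n => ∫⁻ U : UG (k + 1), ENNReal.ofReal (f n U) ∂μ) atTop :=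
        lintegral_liminf_le fun n => (cf n).measurable.ennreal_ofReal
    _ ≤ ENNReal.ofReal (1 / k) := by
        have : ∀ n, ∫⁻ U : UG (k + 1), ENNReal.ofReal (f n U) ∂μ ≤ ENNReal.ofReal (1 / k) := by
          intro n
          rw [← ofReal_integral_eq_lintegral_ofReal (integrable_cont μ (cf n))
            (ae_of_all _ fun U => Finset.sum_nonneg fun j _ => by positivity)]
          exact ENNReal.ofReal_le_ofReal (hInt n)
        exact liminf_le_of_frequently_le' (Frequently.of_forall this)
/-- Gram determinant -/
noncomputable def D {ι κ : Type*} [Fintype ι] [Fintype κ] [DecidableEq κ] (A : Matrix ι κ ℂ) : ℝ := (det (Aᴴ * A)).re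

open scoped ComplexOrder in
theorem D_det {ι κ : Type*} [Fintype ι] [Fintype κ] [DecidableEq κ] (A : Matrix ι κ ℂ) :
    0 ≤ D A ∧ det (Aᴴ * A) = (D A : ℂ) := by
  have h := (Matrix.posSemidef_conjTranspose_mul_self A).det_nonneg
  rw [Complex.nonneg_iff] at h
  exact ⟨h.1, Complex.ext rfl (by simp [h.2])⟩

theorem D_mul {ι κ : Type*} [Fintype ι] [Fintype κ] [DecidableEq κ] (A : Matrix ι κ ℂ) (T : Matrix κ κ ℂ) :
    D (A * T) = D T * D A := by
  have h : det ((A * T)ᴴ * (A * T)) = (D T : ℂ) * D A := by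
    rw [← (D_det A).2, ← (D_det T).2, Matrix.conjTranspose_mul, Matrix.mul_assoc, ← Matrix.mul_assoc Aᴴ,
      det_mul, det_mul, det_mul]; ring
  unfold D at *
  rw [h]; norm_cast

open scoped ComplexOrder in
theorem exists_qr {p n : ℕ} (X : Matrix (Fin p) (Fin n) ℂ) (hX : D X ≠ 0) {f : Fin n → Fin p}
    (hf : Function.Injective f) :
    ∃ (W : UG p) (T : Matrix (Fin n) (Fin n) ℂ), X = W.1.submatrix id f * T := by
  obtain ⟨T, hT⟩ : ∃ T : Matrix (Fin n) (Fin n) ℂ, Xᴴ * X = Tᴴ * T := by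
    open scoped MatrixOrder in
    exact CStarAlgebra.nonneg_iff_eq_star_mul_self.1
      (Matrix.nonneg_iff_posSemidef.2 (Matrix.posSemidef_conjTranspose_mul_self X))
  have hTd : IsUnit T.det := by
    rw [isUnit_iff_ne_zero]
    intro h
    apply hX
    unfold D
    rw [hT, det_mul, h]; simp
  set Q := X * T⁻¹ with hQ
  have hQQ : Qᴴ * Q = 1 := by
    rw [hQ, Matrix.conjTranspose_mul, Matrix.mul_assoc, ← Matrix.mul_assoc Xᴴ, hT, Matrix.mul_assoc Tᴴ,
      Matrix.mul_nonsing_inv T hTd, Matrix.mul_one, ← Matrix.conjTranspose_mul,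
      Matrix.mul_nonsing_inv T hTd, Matrix.conjTranspose_one]
  let u : Fin n → EuclideanSpace ℂ (Fin p) := fun j => WithLp.toLp 2 (fun i => Q i j)
  have hu : Orthonormal ℂ u := by
    rw [orthonormal_iff_ite]
    intro i j
    have := congrFun (congrFun hQQ i) j
    rw [Matrix.mul_apply, Matrix.one_apply] at this
    rw [← this]
    simp [u, PiLp.inner_apply, mul_comm]
  let v : Fin p → EuclideanSpace ℂ (Fin p) := Function.extend f u 0
  have hv : Orthonormal ℂ ((Set.range f).domRestrict v) := by
    let e := Equiv.ofInjective f hf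
    have : (Set.range f).domRestrict v = u ∘ e.symm := by
      funext x
      obtain ⟨i, rfl⟩ := e.surjective x
      simp [v, e, hf.extend_apply]
    rw [this]
    exact hu.comp _ e.symm.injective
  obtain ⟨b, hb⟩ := hv.exists_orthonormalBasis_extension_of_card_eq (by simp)
  refine ⟨⟨Matrix.of fun i j => b j i, ?_⟩, T, ?_⟩
  · rw [Matrix.mem_unitaryGroup_iff']
    ext i j
    have := orthonormal_iff_ite.1 b.orthonormal i j
    rw [Matrix.mul_apply, Matrix.one_apply, ← this]
    simp [PiLp.inner_apply, mul_comm]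
  · have : (Matrix.of fun i j => b j i).submatrix id f = Q := by
      ext i j
      simp only [Matrix.submatrix_apply, Matrix.of_apply, id]
      rw [hb _ ⟨j, rfl⟩]
      simp [v, hf.extend_apply, u]
    rw [this, hQ, Matrix.mul_assoc, Matrix.nonsing_inv_mul T hTd, Matrix.mul_one]

theorem D_sub_unitary {p n : ℕ} (W : UG p) {f : Fin n → Fin p} (hf : Function.Injective f) :
    D (W.1.submatrix id f) = 1 := by
  have h : (W.1.submatrix id f)ᴴ * (W.1.submatrix id f) = 1 := by
    have h := Matrix.mem_unitaryGroup_iff'.1 W.2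
    rw [Matrix.star_eq_conjTranspose] at h
    rw [Matrix.conjTranspose_submatrix]
    ext i j
    have h2 := congrFun (congrFun h (f i)) (f j)
    simp only [Matrix.mul_apply, Matrix.one_apply, hf.eq_iff] at h2 ⊢
    exact h2
  unfold D
  rw [h]; simp

theorem row_sum {p : ℕ} (U : UG p) (c : Fin p) : ∑ b, ‖U.1 c b‖ ^ 2 = 1 := by
  have := col_sum U⁻¹ c
  rw [← this]
  refine Finset.sum_congr rfl fun b _ => ?_
  rw [← norm_star (U.1 c b)]
  rfl

theorem D_castSucc {r q n : ℕ} (h : q + n = r + 1) (V : UG (r + 1)) :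
    D (V.1.submatrix Fin.castSucc (fun i : Fin n => Fin.cast h (Fin.natAdd q i))) =
      ∑ i : Fin q, ‖V.1 (Fin.last r) (Fin.castLE (by omega) i)‖ ^ 2 := by
  set f : Fin n → Fin (r + 1) := fun i : Fin n => Fin.cast h (Fin.natAdd q i) with hfd
  have hf : Function.Injective f := by
    intro i j hij
    simpa [f, Fin.ext_iff] using hij
  set w : Matrix (Fin 1) (Fin n) ℂ := Matrix.of fun _ i => V.1 (Fin.last r) (f i) with hw
  have e1 : (V.1.submatrix Fin.castSucc f)ᴴ * (V.1.submatrix Fin.castSucc f) = 1 - wᴴ * w := by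
    have hV := Matrix.mem_unitaryGroup_iff'.1 V.2
    rw [Matrix.star_eq_conjTranspose] at hV
    rw [eq_sub_iff_add_eq]
    ext i j
    have h2 := congrFun (congrFun hV (f i)) (f j)
    rw [Matrix.mul_apply, Fin.sum_univ_castSucc] at h2
    rw [Matrix.add_apply, Matrix.mul_apply, Matrix.mul_apply]
    simp only [Matrix.one_apply, hf.eq_iff] at h2 ⊢
    rw [← h2]
    simp [w]
  have e2 : det (1 - wᴴ * w) = ((1 - ∑ i, ‖V.1 (Fin.last r) (f i)‖ ^ 2 : ℝ) : ℂ) := by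
    rw [Matrix.det_one_sub_mul_comm]
    simp [w, Matrix.mul_apply, Complex.mul_conj']
  have e3 : D (V.1.submatrix Fin.castSucc f) = 1 - ∑ i, ‖V.1 (Fin.last r) (f i)‖ ^ 2 := by
    unfold D
    rw [e1, e2, Complex.ofReal_re]
  rw [e3, ← row_sum V (Fin.last r), ← (finCongr h).sum_comp, Fin.sum_univ_add]
  simp only [finCongr_apply, f]
  rw [add_sub_cancel_right]
  rfl
theorem continuous_D_sub {m r n : ℕ} (a : Fin r → Fin m) (g : Fin n → Fin m) :
    Continuous (fun U : UG m => D (U.1.submatrix a g)) := by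
  unfold D
  have h : Continuous (fun U : UG m => U.1.submatrix a g) := continuous_subtype_val.matrix_submatrix a g
  exact Complex.continuous_re.comp ((h.matrix_conjTranspose.matrix_mul h).matrix_det)

noncomputable def cc (r q : ℕ) (hq : q ≤ r + 1) : ℝ≥0∞ :=
  ∫⁻ V : UG (r + 1), N (∑ i : Fin q, ‖V.1 (Fin.last r) (Fin.castLE hq i)‖ ^ 2) ∂(haarU (r + 1))

theorem measurable_ccfun (r q : ℕ) (hq : q ≤ r + 1) : Measurable
    (fun V : UG (r + 1) => N (∑ i : Fin q, ‖V.1 (Fin.last r) (Fin.castLE hq i)‖ ^ 2)) := by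
  refine measurable_N.comp (Continuous.measurable ?_)
  exact continuous_finsetSum _ fun i _ => (continuous_entry _ _).norm.pow 2

theorem step_pt {r q n : ℕ} (h : q + n = r + 1) (X : Matrix (Fin (r + 1)) (Fin n) ℂ) :
    ∫⁻ V : UG (r + 1), N (D ((V.1 * X).submatrix Fin.castSucc id)) ∂(haarU (r + 1)) ≤
      N (D X) + cc r q (by omega) := by
  by_cases hX : D X = 0
  · simp [hX, N]
  have hf : Function.Injective (fun i : Fin n => Fin.cast h (Fin.natAdd q i)) := by
    intro i j hij
    simpa [Fin.ext_iff] using hij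
  obtain ⟨W, T, hWT⟩ := exists_qr X hX hf
  have hT : D X = D T := by rw [hWT, D_mul, D_sub_unitary W hf, mul_one]
  have key : ∀ V : UG (r + 1), N (D ((V.1 * X).submatrix Fin.castSucc id)) ≤
      N (D X) + N (∑ i : Fin q, ‖(V * W).1 (Fin.last r) (Fin.castLE (by omega) i)‖ ^ 2) := by
    intro V
    have e : (V.1 * X).submatrix Fin.castSucc id =
        (V * W).1.submatrix Fin.castSucc (fun i : Fin n => Fin.cast h (Fin.natAdd q i)) * T := by
      rw [hWT, ← Matrix.mul_assoc]
      rfl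
    rw [e, D_mul, hT, ← D_castSucc h (V * W)]
    exact N_mul_le (D_det T).1 (D_det _).1
  calc _ ≤ ∫⁻ V : UG (r + 1), (N (D X) +
        N (∑ i : Fin q, ‖(V * W).1 (Fin.last r) (Fin.castLE (by omega) i)‖ ^ 2)) ∂(haarU (r + 1)) :=
        lintegral_mono key
    _ = N (D X) + ∫⁻ V : UG (r + 1), N (∑ i : Fin q, ‖(V * W).1 (Fin.last r) (Fin.castLE (by omega) i)‖ ^ 2) ∂(haarU (r + 1)) := by
        rw [lintegral_add_left measurable_const]; simp
    _ = _ := by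
        rw [lintegral_mul_right_UG (haarU (r + 1)) (measurable_ccfun r q (by omega)) W]
        rfl

theorem step {m r q n : ℕ} (h : q + n = r + 1) (hr : r + 1 ≤ m) (g : Fin n → Fin m)
    (μ : Measure (UG m)) [μ.IsHaarMeasure] [IsProbabilityMeasure μ] :
    ∫⁻ U : UG m, N (D (U.1.submatrix (Fin.castLE (Nat.le_of_succ_le hr)) g)) ∂μ ≤
      ∫⁻ U : UG m, N (D (U.1.submatrix (Fin.castLE hr) g)) ∂μ + cc r q (by omega) := by
  have hi : Function.Injective (Fin.castLE hr) := Fin.castLE_injective hr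
  set f : UG m → ℝ≥0∞ := fun U => N (D (U.1.submatrix (Fin.castLE (Nat.le_of_succ_le hr)) g)) with hfd
  have mf : Measurable f := measurable_N.comp (continuous_D_sub _ _).measurable
  have mb : Measurable (fun x : UG (r + 1) × UG m => f (blk hi x.1 * x.2)) := by
    refine mf.comp (Continuous.measurable ?_)
    exact ((blk_continuous hi).comp continuous_fst).mul continuous_snd
  have e1 : ∫⁻ U, f U ∂μ = ∫⁻ V, ∫⁻ U, f (blk hi V * U) ∂μ ∂(haarU (r + 1)) := by
    simp_rw [lintegral_mul_left_eq_self f]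
    simp
  rw [e1, lintegral_lintegral_swap mb.aemeasurable]
  have pt : ∀ U : UG m, ∫⁻ V, f (blk hi V * U) ∂(haarU (r + 1)) ≤
      N (D (U.1.submatrix (Fin.castLE hr) g)) + cc r q (by omega) := by
    intro U
    refine le_trans (le_of_eq ?_) (step_pt h (U.1.submatrix (Fin.castLE hr) g))
    refine lintegral_congr fun V => ?_
    have e2 := congrArg (fun A => A.submatrix (Fin.castSucc : Fin r → Fin (r + 1)) g) (blk_mul hi V U)
    exact congrArg (fun A => N (D A)) e2
  calc _ ≤ ∫⁻ U : UG m, (N (D (U.1.submatrix (Fin.castLE hr) g)) + cc r q (by omega)) ∂μ := lintegral_mono pt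
    _ = _ := by rw [lintegral_add_right _ measurable_const]; simp

theorem cc_one {q : ℕ} (hq : 0 < q) : cc q q (by omega) ≤ ENNReal.ofReal (1 / q) := by
  refine le_trans (le_of_eq ?_) (N_one_coord hq (haarU (q + 1)) (Fin.last q) (Fin.last q))
  unfold cc
  refine lintegral_congr fun V => ?_
  congr 1
  rw [← row_sum V (Fin.last q), Fin.sum_univ_castSucc, add_sub_cancel_right]
  rfl

theorem cc_eq (r q : ℕ) (hq : q ≤ r + 1) : cc r q hq =
    ∫⁻ V : UG (r + 1), N (D (V.1.submatrix (Fin.castLE hq) (fun _ : Fin 1 => Fin.last r))) ∂(haarU (r + 1)) := by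
  unfold cc
  rw [← lintegral_inv_UG _ (measurable_ccfun r q hq)]
  refine lintegral_congr fun V => ?_
  congr 1
  have h : ((V.1.submatrix (Fin.castLE hq) (fun _ : Fin 1 => Fin.last r))ᴴ * (V.1.submatrix (Fin.castLE hq) (fun _ : Fin 1 => Fin.last r))).det
     = ((∑ i : Fin q, ‖V.1 (Fin.castLE hq i) (Fin.last r)‖ ^ 2 : ℝ) : ℂ) := by
    simp [Matrix.mul_apply, Complex.conj_mul']
  unfold D
  rw [h, Complex.ofReal_re]
  refine Finset.sum_congr rfl fun i _ => ?_
  rw [← norm_star (V.1 _ _)]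
  rfl

theorem D_full {m n : ℕ} (hm : m ≤ m) {g : Fin n → Fin m} (hg : Function.Injective g) (U : UG m) :
    D (U.1.submatrix (Fin.castLE hm) g) = 1 := D_sub_unitary U hg

theorem cc_le (r d : ℕ) : ∀ q (_ : 0 < q) (h : q + d = r + 1), cc r q (by omega) ≤
    ∑ i ∈ Finset.Ico q (r + 1), ENNReal.ofReal (1 / i) := by
  induction d with
  | zero =>
    intro q hq h
    obtain rfl : q = r + 1 := by omega
    rw [cc_eq]
    have : Function.Injective (fun _ : Fin 1 => Fin.last r) := Function.injective_of_subsingleton _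
    simp_rw [D_full _ this, N_one]
    simp
  | succ d ih =>
    intro q hq h
    have h1 := step (m := r + 1) (r := q) (q := q) (n := 1) rfl (by omega) (fun _ => Fin.last r) (haarU (r + 1))
    have h2 := ih (q + 1) (by omega) (by omega)
    rw [cc_eq] at h2 ⊢
    rw [Finset.sum_eq_sum_Ico_succ_bot (by omega)]
    refine (h1.trans (add_le_add h2 (cc_one hq))).trans (le_of_eq (add_comm _ _))

theorem main_lint {m n : ℕ} (μ : Measure (UG m)) [μ.IsHaarMeasure] [IsProbabilityMeasure μ]
    {g : Fin n → Fin m} (hg : Function.Injective g) (d : ℕ) : ∀ r (_ : n ≤ r) (h : r + d = m),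
    ∫⁻ U : UG m, N (D (U.1.submatrix (Fin.castLE (show r ≤ m by omega)) g)) ∂μ ≤
      ∑ k ∈ Finset.range d, ∑ j ∈ Finset.range n, ENNReal.ofReal (1 / ((r : ℝ) + k - j)) := by
  induction d with
  | zero =>
    intro r hr h
    obtain rfl : r = m := by omega
    simp_rw [D_full _ hg, N_one]
    simp
  | succ d ih =>
    intro r hr h
    have h1 := step (m := m) (r := r) (q := r + 1 - n) (n := n) (by omega) (by omega) g μ
    have h2 := ih (r + 1) (by omega) (by omega)
    have h3 := cc_le r n (r + 1 - n) (by omega) (by omega)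
    refine h1.trans ?_
    rw [Finset.sum_range_succ']
    refine add_le_add (h2.trans (le_of_eq ?_)) (h3.trans (le_of_eq ?_))
    · refine Finset.sum_congr rfl fun k _ => Finset.sum_congr rfl fun j _ => ?_
      push_cast
      congr 3
      ring
    · rw [Finset.sum_Ico_eq_sum_range, ← Finset.sum_range_reflect]
      have e : r + 1 - (r + 1 - n) = n := by omega
      rw [e]
      refine Finset.sum_congr rfl fun j hj => ?_
      have hj := Finset.mem_range.1 hj
      have e2 : r + 1 - n + (n - 1 - j) = r - j := by omega
      rw [e2, Nat.cast_sub (by omega)]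
      simp
/-- tangent line inequality -/
theorem tangent {s : ℝ} (hs : 0 ≤ s) (x y : ℝ) :
    Real.log (1 + s * Real.exp y) + s * Real.exp y / (1 + s * Real.exp y) * (x - y) ≤ Real.log (1 + s * Real.exp x) := by
  have hy : 0 < 1 + s * Real.exp y := by positivity
  have hx : 0 < 1 + s * Real.exp x := by positivity
  set a := s * Real.exp y / (1 + s * Real.exp y) with ha
  have a0 : 0 ≤ a := by positivity
  have a1 : 0 ≤ 1 - a := by
    rw [ha, one_sub_div hy.ne']; apply div_nonneg _ hy.le; linarith
  have hc := convexOn_exp.2 (Set.mem_univ 0) (Set.mem_univ (x - y)) a1 a0 (by ring)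
  simp only [smul_eq_mul, mul_zero, zero_add, Real.exp_zero, mul_one] at hc
  have e : (1 - a) + a * Real.exp (x - y) = (1 + s * Real.exp x) / (1 + s * Real.exp y) := by
    rw [Real.exp_sub, ha]
    have := Real.exp_pos y
    field_simp
    ring
  rw [e, ← Real.le_log_iff_exp_le (by positivity), Real.log_div hx.ne' hy.ne'] at hc
  linarith

theorem det_one_add {n : ℕ} {B : Matrix (Fin n) (Fin n) ℂ} (hB : B.IsHermitian) (s : ℝ) :
    det ((1 : Matrix (Fin n) (Fin n) ℂ) + (s : ℂ) • B) = ∏ i, ((1 + s * hB.eigenvalues i : ℝ) : ℂ) := by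
  have hsp := hB.spectral_theorem
  rw [Unitary.conjStarAlgAut_apply] at hsp
  set W := (hB.eigenvectorUnitary : Matrix (Fin n) (Fin n) ℂ) with hW
  have hWW : W * star W = 1 := Matrix.mem_unitaryGroup_iff.1 hB.eigenvectorUnitary.2
  have e : (1 : Matrix (Fin n) (Fin n) ℂ) + (s : ℂ) • B =
      W * diagonal (fun i => ((1 + s * hB.eigenvalues i : ℝ) : ℂ)) * star W := by
    have e1 : diagonal (fun i => ((1 + s * hB.eigenvalues i : ℝ) : ℂ)) =
        (1 : Matrix (Fin n) (Fin n) ℂ) + (s : ℂ) • diagonal (RCLike.ofReal ∘ hB.eigenvalues) := by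
      ext i j
      by_cases h : i = j
      · subst h; simp
      · simp [h]
    rw [e1, Matrix.mul_add, Matrix.add_mul, Matrix.mul_one, hWW, Matrix.mul_smul, Matrix.smul_mul]
    congr 2
  rw [e, det_mul, det_mul, mul_right_comm, ← det_mul, hWW, det_one, one_mul, det_diagonal]

open scoped ComplexOrder in
theorem det_pos {r n : ℕ} (A : Matrix (Fin r) (Fin n) ℂ) {s : ℝ} (hs : 0 ≤ s) :
    0 < (det ((1 : Matrix (Fin n) (Fin n) ℂ) + (s : ℂ) • (Aᴴ * A))).re := by
  have hp := Matrix.posSemidef_conjTranspose_mul_self A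
  rw [det_one_add hp.isHermitian, ← Complex.ofReal_prod, Complex.ofReal_re]
  refine Finset.prod_pos fun i _ => ?_
  have := hp.eigenvalues_nonneg i
  positivity

open scoped ComplexOrder in
theorem det_bound {r n : ℕ} (A : Matrix (Fin r) (Fin n) ℂ) (hA : 0 < D A) {s : ℝ} (hs : 0 ≤ s) (y : ℝ) :
    (n : ℝ) * Real.log (1 + s * Real.exp y) +
      s * Real.exp y / (1 + s * Real.exp y) * (Real.log (D A) - n * y) ≤
      Real.log ((det ((1 : Matrix (Fin n) (Fin n) ℂ) + (s : ℂ) • (Aᴴ * A))).re) := by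
  have hp := Matrix.posSemidef_conjTranspose_mul_self A
  have hH := hp.isHermitian
  have hdet : (Aᴴ * A).det = ∏ i, (hH.eigenvalues i : ℂ) := hH.det_eq_prod_eigenvalues
  have hD : D A = ∏ i, hH.eigenvalues i := by
    unfold D; rw [hdet]; norm_cast
  have hne : ∀ i, hH.eigenvalues i ≠ 0 := by
    intro i hi
    rw [hD, Finset.prod_eq_zero (Finset.mem_univ i) hi] at hA
    exact lt_irrefl _ hA
  have hpos : ∀ i, 0 < hH.eigenvalues i := fun i => lt_of_le_of_ne (hp.eigenvalues_nonneg i) (hne i).symm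
  have hdet2 : (det ((1 : Matrix (Fin n) (Fin n) ℂ) + (s : ℂ) • (Aᴴ * A))) = ∏ i, ((1 + s * hH.eigenvalues i : ℝ) : ℂ) :=
    det_one_add hH s
  have e2 : (det ((1 : Matrix (Fin n) (Fin n) ℂ) + (s : ℂ) • (Aᴴ * A))).re = ∏ i, (1 + s * hH.eigenvalues i) := by
    rw [hdet2]; norm_cast
  rw [e2, hD, Real.log_prod (fun i _ => (hne i)), Real.log_prod (fun i _ => by have := hpos i; positivity)]
  calc _ = ∑ i : Fin n, (Real.log (1 + s * Real.exp y) + s * Real.exp y / (1 + s * Real.exp y) * (Real.log (hH.eigenvalues i) - y)) := by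
        rw [Finset.sum_add_distrib, ← Finset.mul_sum, Finset.sum_sub_distrib]; simp
    _ ≤ _ := by
        refine Finset.sum_le_sum fun i _ => ?_
        have := tangent hs (Real.log (hH.eigenvalues i)) y
        rwa [Real.exp_log (hpos i)] at this

end JacobiCap

/-- **Lower bound on the ergodic capacity of the MIMO Jacobi fading channel.**
If `mt ≤ mr` and `mt + mr ≤ m`, then for every SNR `s ≥ 0`,
`E[ln det (I + s · Hᴴ H)] ≥ mt · ln (1 + s · exp (−(1/mt) · Σ_j Σ_k 1/(mr + k − j)))`,
the expectation being over the Haar probability measure on the unitary group `U(m)`. -/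
theorem jacobi_ergodic_capacity_lower_bound
    (m mt mr : ℕ) (hm : 0 < m) (hmt : 0 < mt) (hmr : 0 < mr)
    (h1 : mt ≤ mr) (h2 : mt + mr ≤ m)
    (μ : Measure (Matrix.unitaryGroup (Fin m) ℂ))
    [μ.IsHaarMeasure] [IsProbabilityMeasure μ]
    (s : ℝ) (hs : 0 ≤ s) :
    (mt : ℝ) * Real.log (1 + s * Real.exp (-(1 / (mt : ℝ)) *
        ∑ j ∈ Finset.range mt, ∑ k ∈ Finset.range (m - mr),
          1 / ((mr : ℝ) + k - j)))
      ≤ ergodicCapacity m mt mr (le_trans (Nat.le_add_left mr mt) h2)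
          (le_trans (Nat.le_add_right mt mr) h2) s μ := by
  have hmt' : (mt : ℝ) ≠ 0 := by positivity
  set S : ℝ := ∑ j ∈ Finset.range mt, ∑ k ∈ Finset.range (m - mr), 1 / ((mr : ℝ) + k - j) with hS
  have hrm : mr ≤ m := le_trans (Nat.le_add_left mr mt) h2
  have htm : mt ≤ m := le_trans (Nat.le_add_right mt mr) h2
  have hterm : ∀ j ∈ Finset.range mt, ∀ k ∈ Finset.range (m - mr), (0:ℝ) ≤ 1 / ((mr : ℝ) + k - j) := by
    intro j hj k _
    have hj : j < mt := Finset.mem_range.1 hj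
    have : (j : ℝ) ≤ mr := by exact_mod_cast (by omega : j ≤ mr)
    apply one_div_nonneg.2
    have : (0:ℝ) ≤ k := Nat.cast_nonneg k
    linarith
  have hS0 : 0 ≤ S := Finset.sum_nonneg fun j hj => Finset.sum_nonneg fun k hk => hterm j hj k hk
  let d : JacobiCap.UG m → ℝ := fun U => JacobiCap.D (jacobiH m mt mr hrm htm U)
  have cd : Continuous d := JacobiCap.continuous_D_sub (Fin.castLE hrm) (Fin.castLE htm)
  have mN : Measurable (fun U => JacobiCap.N (d U)) := JacobiCap.measurable_N.comp cd.measurable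
  have hlint : ∫⁻ U, JacobiCap.N (d U) ∂μ ≤ ENNReal.ofReal S := by
    refine (JacobiCap.main_lint μ (Fin.castLE_injective htm) (m - mr) mr h1 (by omega)).trans (le_of_eq ?_)
    rw [Finset.sum_comm, hS, ENNReal.ofReal_sum_of_nonneg
      (fun j hj => Finset.sum_nonneg fun k hk => hterm j hj k hk)]
    refine Finset.sum_congr rfl fun j hj => ?_
    rw [ENNReal.ofReal_sum_of_nonneg (fun k hk => hterm j hj k hk)]
  have hfin : ∫⁻ U, JacobiCap.N (d U) ∂μ ≠ ⊤ := ne_top_of_le_ne_top ENNReal.ofReal_ne_top hlint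
  have hae : ∀ᵐ U ∂μ, JacobiCap.N (d U) < ⊤ := ae_lt_top mN hfin
  have iN : Integrable (fun U => (JacobiCap.N (d U)).toReal) μ := integrable_toReal_of_lintegral_ne_top mN.aemeasurable hfin
  have hN : ∫ U, (JacobiCap.N (d U)).toReal ∂μ ≤ S := by
    rw [integral_toReal mN.aemeasurable hae]
    exact ENNReal.toReal_le_of_le_ofReal hS0 hlint
  set y : ℝ := -(1 / (mt : ℝ)) * S with hy
  have hmy : (mt : ℝ) * y = -S := by rw [hy]; field_simp
  set a : ℝ := s * Real.exp y / (1 + s * Real.exp y) with ha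
  have ha0 : 0 ≤ a := by positivity
  have hpt : ∀ᵐ U ∂μ, (mt : ℝ) * Real.log (1 + s * Real.exp y) + a * (-(JacobiCap.N (d U)).toReal + S) ≤
      Real.log ((Matrix.det ((1 : Matrix (Fin mt) (Fin mt) ℂ) +
      (s : ℂ) • ((jacobiH m mt mr hrm htm U)ᴴ * jacobiH m mt mr hrm htm U))).re) := by
    filter_upwards [hae] with U hU
    have hpos : 0 < d U := by
      by_contra hcon
      simp [JacobiCap.N, not_lt.1 hcon] at hU
    refine le_trans ?_ (JacobiCap.det_bound (jacobiH m mt mr hrm htm U) hpos hs y)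
    rw [hmy, sub_neg_eq_add]
    gcongr
    simp only [JacobiCap.N, not_le.2 hpos, if_false, ENNReal.toReal_ofReal']
    have := le_max_left (-Real.log (d U)) 0
    change _ ≤ Real.log (d U)
    linarith
  have iR : Integrable (fun U => Real.log ((Matrix.det ((1 : Matrix (Fin mt) (Fin mt) ℂ) +
      (s : ℂ) • ((jacobiH m mt mr hrm htm U)ᴴ * jacobiH m mt mr hrm htm U))).re)) μ := by
    refine JacobiCap.integrable_cont μ (Continuous.log ?_ ?_)
    · have h : Continuous (fun U : JacobiCap.UG m => jacobiH m mt mr hrm htm U) :=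
        continuous_subtype_val.matrix_submatrix _ _
      have h' := (h.matrix_conjTranspose.matrix_mul h).const_smul (s : ℂ)
      exact Complex.continuous_re.comp ((continuous_const.add h').matrix_det)
    · intro U
      exact (JacobiCap.det_pos (jacobiH m mt mr hrm htm U) hs).ne'
  have iL : Integrable (fun U => (mt : ℝ) * Real.log (1 + s * Real.exp y) + a * (-(JacobiCap.N (d U)).toReal + S)) μ :=
    (integrable_const _).add ((iN.neg.add (integrable_const _)).const_mul a)
  have i1 : Integrable (fun U => -(JacobiCap.N (d U)).toReal) μ := iN.neg
  have i2 : Integrable (fun U => a * (-(JacobiCap.N (d U)).toReal + S)) μ :=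
    (i1.add (integrable_const _)).const_mul a
  have hfinal := integral_mono_ae iL iR hpt
  rw [integral_add (integrable_const _) i2, integral_const, integral_const_mul,
    integral_add i1 (integrable_const S), integral_neg] at hfinal
  simp only [integral_const, probReal_univ, one_smul] at hfinal
  refine le_trans ?_ hfinal
  have : 0 ≤ a * (-∫ U, (JacobiCap.N (d U)).toReal ∂μ + S) := mul_nonneg ha0 (by linarith)
  linarith
end

section
/- Let m, m_t, m_r be positive integers with m_t ≤ m_r and m_t + m_r ≤ m. Then the ergodic capacity C(s) = E[ln det(I_{m_t} + s·HᴴH)] of the MIMO Jacobi fading channel satisfies lim_{s→∞} ( C(s) − m_t·ln s ) = − Σ_{j=0}^{m_t−1} Σ_{k=0}^{m−m_r−1} 1/(m_r + k − j); that is, in the high-SNR regime the ergodic capacity equals m_t·ln(s) − Σ_{j=0}^{m_t−1} Σ_{k=0}^{m−m_r−1} 1/(m_r+k−j) + o(1). -/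
open MeasureTheory Matrix

/-- Standard complex Gaussian measure on `ℂⁿ`. -/
noncomputable def gam (n : ℕ) : Measure (EuclideanSpace ℂ (Fin n)) :=
  volume.withDensity fun x => ENNReal.ofReal (Real.pi⁻¹ ^ n * Real.exp (-‖x‖ ^ 2))

lemma gam_finrank (n : ℕ) : Module.finrank ℝ (EuclideanSpace ℂ (Fin n)) = 2 * n := by
  have := Module.finrank_mul_finrank ℝ ℂ (EuclideanSpace ℂ (Fin n))
  simp at this
  exact this.symm

lemma gam_dens_meas (n : ℕ) : Measurable (fun x : EuclideanSpace ℂ (Fin n) =>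
    ENNReal.ofReal (Real.pi⁻¹ ^ n * Real.exp (-‖x‖ ^ 2))) := by fun_prop

lemma gam_integral {F : Type*} [NormedAddCommGroup F] [NormedSpace ℝ F] (n : ℕ)
    (g : EuclideanSpace ℂ (Fin n) → F) :
    ∫ x, g x ∂(gam n) = ∫ x, (Real.pi⁻¹ ^ n * Real.exp (-‖x‖ ^ 2)) • g x := by
  unfold gam
  rw [integral_withDensity_eq_integral_toReal_smul (gam_dens_meas n) (by simp)]
  congr with x
  rw [ENNReal.toReal_ofReal (by positivity)]

lemma gam_integrable {F : Type*} [NormedAddCommGroup F] [NormedSpace ℝ F] (n : ℕ)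
    (g : EuclideanSpace ℂ (Fin n) → F) :
    Integrable g (gam n) ↔
      Integrable (fun x => (Real.pi⁻¹ ^ n * Real.exp (-‖x‖ ^ 2)) • g x) volume := by
  unfold gam
  rw [integrable_withDensity_iff_integrable_smul' (gam_dens_meas n) (by simp)]
  apply iff_of_eq
  congr with x
  rw [ENNReal.toReal_ofReal (by positivity)]

lemma gam_density_integral (n : ℕ) :
    ∫ x : EuclideanSpace ℂ (Fin n), Real.pi⁻¹ ^ n * Real.exp (-‖x‖ ^ 2) = 1 := by
  have h := GaussianFourier.integral_rexp_neg_mul_sq_norm (V := EuclideanSpace ℂ (Fin n))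
    (b := 1) one_pos
  rw [gam_finrank] at h
  rw [integral_const_mul]
  simp only [neg_mul, one_mul, div_one] at h
  rw [h]
  have : ((2 * n : ℕ) : ℝ) / 2 = n := by push_cast; ring
  rw [this, Real.rpow_natCast, inv_pow, inv_mul_cancel₀]
  positivity

instance gam_prob (n : ℕ) : IsProbabilityMeasure (gam n) := by
  constructor
  unfold gam
  rw [withDensity_apply _ MeasurableSet.univ, Measure.restrict_univ,
    ← ofReal_integral_eq_lintegral_ofReal, gam_density_integral, ENNReal.ofReal_one]
  · exact Integrable.of_integral_ne_zero (by rw [gam_density_integral]; simp)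
  · exact Filter.Eventually.of_forall fun x => by positivity

lemma gam_charFun (n : ℕ) (t : EuclideanSpace ℂ (Fin n)) :
    charFun (gam n) t = Complex.exp (-(‖t‖ ^ 2 : ℝ) / 4) := by
  rw [charFun_apply, gam_integral]
  have h := GaussianFourier.integral_cexp_neg_mul_sq_norm_add (V := EuclideanSpace ℂ (Fin n))
    (b := 1) (by simp) Complex.I t
  rw [gam_finrank] at h
  have h3 : ∀ x : EuclideanSpace ℂ (Fin n), (Real.pi⁻¹ ^ n * Real.exp (-‖x‖ ^ 2)) •
      Complex.exp ((inner ℝ x t : ℝ) * Complex.I) =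
      (Real.pi : ℂ)⁻¹ ^ n * Complex.exp (-1 * ‖x‖ ^ 2 + Complex.I * (inner ℝ t x : ℝ)) := by
    intro x
    rw [Complex.exp_add, real_inner_comm, Complex.real_smul]
    push_cast
    rw [mul_comm Complex.I]
    ring_nf
  simp_rw [h3]
  rw [integral_const_mul, h]
  have : ((2 * n : ℕ) : ℂ) / 2 = n := by push_cast; ring
  rw [this, Complex.cpow_natCast, div_one, ← mul_assoc, ← mul_pow, inv_mul_cancel₀, one_pow,
    one_mul]
  · simp
  · exact_mod_cast Real.pi_ne_zero

lemma real_inner_euclid (n : ℕ) (x y : EuclideanSpace ℂ (Fin n)) :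
    inner ℝ x y = (inner ℂ x y).re := by
  simp [PiLp.inner_apply]

/-- Action of a matrix on `EuclideanSpace`. -/
noncomputable def act {r n : ℕ} (C : Matrix (Fin r) (Fin n) ℂ) (x : EuclideanSpace ℂ (Fin n)) :
    EuclideanSpace ℂ (Fin r) := WithLp.toLp 2 (C *ᵥ x.ofLp)

lemma act_apply {r n : ℕ} (C : Matrix (Fin r) (Fin n) ℂ) (x : EuclideanSpace ℂ (Fin n)) (i) :
    act C x i = ∑ j, C i j * x j := rfl

lemma act_continuous {r n : ℕ} (C : Matrix (Fin r) (Fin n) ℂ) : Continuous (act C) := by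
  unfold act
  fun_prop

lemma act_inner {r n : ℕ} (C : Matrix (Fin r) (Fin n) ℂ) (x : EuclideanSpace ℂ (Fin n))
    (y : EuclideanSpace ℂ (Fin r)) : inner ℂ (act C x) y = inner ℂ x (act Cᴴ y) := by
  simp only [EuclideanSpace.inner_eq_star_dotProduct, act]
  rw [star_mulVec, dotProduct_comm, dotProduct_comm _ (star x.ofLp), ← dotProduct_mulVec]

lemma act_act {r n p : ℕ} (C : Matrix (Fin r) (Fin n) ℂ) (D : Matrix (Fin n) (Fin p) ℂ) (x) :
    act C (act D x) = act (C * D) x := by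
  simp [act]

lemma gam_map {r n : ℕ} (C : Matrix (Fin r) (Fin n) ℂ) (hC : C * Cᴴ = 1) :
    MeasurePreserving (act C) (gam n) (gam r) := by
  refine ⟨(act_continuous C).measurable, ?_⟩
  haveI : IsProbabilityMeasure ((gam n).map (act C)) :=
    Measure.isProbabilityMeasure_map (act_continuous C).aemeasurable
  apply Measure.ext_of_charFun
  ext t
  rw [gam_charFun]
  have h1 : charFun ((gam n).map (act C)) t = charFun (gam n) (act Cᴴ t) := by
    rw [charFun_apply, charFun_apply, integral_map (act_continuous C).aemeasurable]
    · congr with x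
      rw [real_inner_euclid, real_inner_euclid, act_inner]
    · apply Continuous.aestronglyMeasurable
      fun_prop
  rw [h1, gam_charFun]
  congr 4
  have : inner ℂ (act Cᴴ t) (act Cᴴ t) = inner ℂ t t := by
    rw [act_inner, act_act]
    simp [hC, act]
  rw [inner_self_eq_norm_sq_to_K, inner_self_eq_norm_sq_to_K] at this
  exact_mod_cast this

/-- `∫ log ‖x‖²` under the Gaussian. -/
noncomputable def gA (n : ℕ) : ℝ := ∫ x, Real.log (‖x‖ ^ 2) ∂(gam n)


lemma logGamma_complex (n : ℕ) :
    IntegrableOn (fun t : ℝ => t ^ n * (Real.exp (-t) * Real.log t)) (Set.Ioi 0) ∧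
    ∫ t in Set.Ioi (0 : ℝ), t ^ n * (Real.exp (-t) * Real.log t) =
      n.factorial * (-Real.eulerMascheroniConstant + harmonic n) := by
  have hs : 0 < ((n : ℂ) + 1).re := by simp; positivity
  have key := (mellin_hasDerivAt_of_isBigO_rpow (E := ℂ) (f := fun x => ((Real.exp (-x) : ℝ) : ℂ))
    (s := (n : ℂ) + 1) (a := n + 2) (b := 0) ?_ ?_ (by simp) ?_ hs)
  · have e : ∀ t ∈ Set.Ioi (0 : ℝ), ((t : ℂ) ^ ((n : ℂ) + 1 - 1)) •
        ((Real.log t) • ((Real.exp (-t) : ℝ) : ℂ)) =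
        ((t ^ n * (Real.exp (-t) * Real.log t) : ℝ) : ℂ) := by
      intro t ht
      rw [add_sub_cancel_right, Complex.cpow_natCast, Complex.real_smul, smul_eq_mul]
      push_cast
      ring
    constructor
    · have h1 : IntegrableOn (fun t : ℝ => ((t ^ n * (Real.exp (-t) * Real.log t) : ℝ) : ℂ))
          (Set.Ioi 0) := by
        refine IntegrableOn.congr_fun key.1 (fun t ht => ?_) measurableSet_Ioi
        exact e t ht
      exact h1.re
    · have h2 := key.2
      rw [← Complex.GammaIntegral_eq_mellin] at h2
      have h3 : HasDerivAt Complex.Gamma (mellin (fun t => Real.log t •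
          ((Real.exp (-t) : ℝ) : ℂ)) ((n : ℂ) + 1)) ((n : ℂ) + 1) := by
        refine HasDerivAt.congr_of_eventuallyEq h2 ?_
        have : IsOpen {s : ℂ | 0 < s.re} := Complex.continuous_re.isOpen_preimage _ isOpen_Ioi
        filter_upwards [this.mem_nhds hs] with s hs'
        exact Complex.Gamma_eq_integral hs'
      have h4 := h3.unique (Complex.hasDerivAt_Gamma_nat n)
      unfold mellin at h4
      rw [setIntegral_congr_fun measurableSet_Ioi e, integral_complex_ofReal] at h4
      exact_mod_cast h4
  · refine (Continuous.continuousOn ?_).locallyIntegrableOn measurableSet_Ioi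
    fun_prop
  · rw [← Asymptotics.isBigO_norm_left]
    simp_rw [Complex.norm_real, Asymptotics.isBigO_norm_left]
    simpa only [neg_one_mul] using (isLittleO_exp_neg_mul_rpow_atTop zero_lt_one _).isBigO
  · simp_rw [neg_zero, Real.rpow_zero]
    refine Asymptotics.isBigO_const_of_tendsto (y := (1 : ℂ)) ?_ one_ne_zero
    rw [(by simp : (1 : ℂ) = Real.exp (-0))]
    exact Continuous.continuousWithinAt (by fun_prop)

lemma radial_sub (n : ℕ) (g : ℝ → ℝ) :
    ∫ y in Set.Ioi (0 : ℝ), y ^ (2 * (n + 1) - 1) • (Real.exp (-y ^ 2) * g (y ^ 2)) =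
      (1 / 2) * ∫ t in Set.Ioi (0 : ℝ), t ^ n * (Real.exp (-t) * g t) := by
  rw [← integral_comp_rpow_Ioi_of_pos (p := 2)
    (g := fun t => t ^ n * (Real.exp (-t) * g t)) two_pos, ← integral_const_mul]
  apply setIntegral_congr_fun measurableSet_Ioi
  intro y hy
  have : (y : ℝ) ^ ((2 : ℝ) - 1) = y := by norm_num
  simp only [this, smul_eq_mul, Real.rpow_two]
  rw [show 2 * (n + 1) - 1 = 2 * n + 1 by omega]
  ring

lemma radial_sub_int (n : ℕ) (g : ℝ → ℝ) :
    IntegrableOn (fun y => y ^ (2 * (n + 1) - 1) • (Real.exp (-y ^ 2) * g (y ^ 2))) (Set.Ioi 0) ↔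
      IntegrableOn (fun t : ℝ => t ^ n * (Real.exp (-t) * g t)) (Set.Ioi 0) := by
  rw [← integrableOn_Ioi_comp_rpow_iff' (fun t : ℝ => t ^ n * (Real.exp (-t) * g t)) (p := 2) two_ne_zero]
  apply integrableOn_congr_fun _ measurableSet_Ioi
  intro y hy
  have : (y : ℝ) ^ ((2 : ℝ) - 1) = y := by norm_num
  simp only [this, smul_eq_mul, Real.rpow_two]
  rw [show 2 * (n + 1) - 1 = 2 * n + 1 by omega]
  ring

lemma gam_radial (n : ℕ) : ∃ c : ℝ, ∀ g : ℝ → ℝ,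
    ∫ x, g (‖x‖ ^ 2) ∂(gam (n + 1)) =
      c * ∫ t in Set.Ioi (0 : ℝ), t ^ n * (Real.exp (-t) * g t) := by
  refine ⟨Real.pi⁻¹ ^ (n + 1) * ((2 * (n + 1) : ℕ) * ((volume : Measure
    (EuclideanSpace ℂ (Fin (n + 1)))).real (Metric.ball 0 1) * (1 / 2))), fun g => ?_⟩
  rw [gam_integral]
  have h := integral_fun_norm_addHaar (volume : Measure (EuclideanSpace ℂ (Fin (n + 1))))
    (fun y => Real.exp (-y ^ 2) * g (y ^ 2))
  rw [gam_finrank, radial_sub] at h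
  simp only [smul_eq_mul, mul_assoc] at h ⊢
  rw [integral_const_mul, h]
  simp only [nsmul_eq_mul]

lemma gA_eq (n : ℕ) : gA (n + 1) = -Real.eulerMascheroniConstant + harmonic n := by
  obtain ⟨c, hc⟩ := gam_radial n
  have h1 := hc (fun _ => 1)
  have h2 := hc Real.log
  rw [(logGamma_complex n).2] at h2
  have h3 : ∫ t in Set.Ioi (0 : ℝ), t ^ n * (Real.exp (-t) * 1) = n.factorial := by
    rw [← Real.Gamma_nat_eq_factorial, Real.Gamma_eq_integral (by positivity)]
    apply setIntegral_congr_fun measurableSet_Ioi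
    intro t ht
    simp [mul_comm]
  rw [h3] at h1
  simp only [integral_const, probReal_univ, smul_eq_mul, mul_one] at h1
  rw [gA, h2, ← mul_assoc, ← h1, one_mul]

lemma gam_log_integrable (n : ℕ) :
    Integrable (fun x => Real.log (‖x‖ ^ 2)) (gam (n + 1)) := by
  rw [gam_integrable]
  have h := integrable_fun_norm_addHaar
    (volume : Measure (EuclideanSpace ℂ (Fin (n + 1))))
    (f := fun y => Real.exp (-y ^ 2) * Real.log (y ^ 2))
  rw [gam_finrank, radial_sub_int] at h
  have := (h.2 (logGamma_complex n).1).const_mul (Real.pi⁻¹ ^ (n + 1))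
  simpa only [smul_eq_mul, mul_assoc] using this

lemma gam_ae_ne (n : ℕ) : ∀ᵐ x ∂(gam (n + 1)), x ≠ 0 := by
  unfold gam
  apply (withDensity_absolutelyContinuous _ _).ae_le
  rw [mem_ae_iff]
  simp [Set.compl_setOf]


/-- The matrix with given columns. -/
def colMat {r p : ℕ} (g : Fin p → EuclideanSpace ℂ (Fin r)) : Matrix (Fin r) (Fin p) ℂ :=
  Matrix.of fun i j => g j i

/-- Gram determinant of a matrix. -/
noncomputable def mdet {r p : ℕ} (X : Matrix (Fin r) (Fin p) ℂ) : ℝ := (det (Xᴴ * X)).re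

lemma colMat_act {r n p : ℕ} (C : Matrix (Fin r) (Fin n) ℂ)
    (g : Fin p → EuclideanSpace ℂ (Fin n)) :
    colMat (fun j => act C (g j)) = C * colMat g := by
  ext i j
  simp [colMat, act_apply, Matrix.mul_apply]

open scoped ComplexOrder in
lemma mdet_coe {r p : ℕ} (X : Matrix (Fin r) (Fin p) ℂ) :
    (mdet X : ℂ) = det (Xᴴ * X) ∧ 0 ≤ mdet X := by
  have h := (posSemidef_conjTranspose_mul_self X).det_nonneg
  rw [Complex.le_def] at h
  refine ⟨?_, h.1⟩
  apply Complex.ext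
  · simp [mdet]
  · simpa using h.2

lemma mdet_unitary {n p : ℕ} (Q : Matrix (Fin n) (Fin n) ℂ) (hQ : Qᴴ * Q = 1)
    (X : Matrix (Fin n) (Fin p) ℂ) : mdet (Q * X) = mdet X := by
  unfold mdet
  rw [conjTranspose_mul, Matrix.mul_assoc, ← Matrix.mul_assoc Qᴴ, hQ, Matrix.one_mul]

lemma mdet_mul {n p : ℕ} (X : Matrix (Fin n) (Fin p) ℂ) (R : Matrix (Fin p) (Fin p) ℂ) :
    mdet (X * R) = mdet X * mdet R := by
  have h : (mdet (X * R) : ℂ) = (mdet X : ℂ) * (mdet R : ℂ) := by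
    rw [(mdet_coe _).1, (mdet_coe _).1, (mdet_coe _).1, conjTranspose_mul, ← Matrix.mul_assoc,
      Matrix.mul_assoc Rᴴ, det_mul, det_mul, det_mul]
    ring
  exact_mod_cast h

lemma exists_qr {n p : ℕ} (hp : p ≤ n) (X : Matrix (Fin n) (Fin p) ℂ) :
    ∃ Q ∈ Matrix.unitaryGroup (Fin n) ℂ, ∀ (i : Fin n) (j : Fin p), p ≤ i →
      (Qᴴ * X) i j = 0 := by
  let f : Fin n → EuclideanSpace ℂ (Fin n) := fun k =>
    if h : (k : ℕ) < p then WithLp.toLp 2 (fun i => X i ⟨k, h⟩) else 0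
  have hc : Module.finrank ℂ (EuclideanSpace ℂ (Fin n)) = Fintype.card (Fin n) := by simp
  let b := InnerProductSpace.gramSchmidtOrthonormalBasis hc f
  refine ⟨Matrix.of fun i k => b k i, ?_, ?_⟩
  · rw [Matrix.mem_unitaryGroup_iff']
    ext k l
    have := orthonormal_iff_ite.1 b.orthonormal k l
    rw [Matrix.one_apply, ← this]
    simp [Matrix.mul_apply, PiLp.inner_apply, mul_comm, star_eq_conjTranspose]
  · intro i j hij
    have h := InnerProductSpace.gramSchmidtOrthonormalBasis_inv_triangular hc f
      (i := Fin.castLE hp j) (j := i) (by rw [Fin.lt_def]; simp; omega)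
    rw [← h]
    have hf : f (Fin.castLE hp j) = WithLp.toLp 2 (fun i => X i j) := by
      simp [f]
    rw [hf]
    simp [Matrix.mul_apply, PiLp.inner_apply, mul_comm, b]

lemma gram_step {p d : ℕ} (x : Fin p → EuclideanSpace ℂ (Fin (p + d))) :
    ∃ C : Matrix (Fin d) (Fin (p + d)) ℂ, C * Cᴴ = 1 ∧ ∀ y,
      mdet (colMat (Fin.cons y x : Fin (p + 1) → EuclideanSpace ℂ (Fin (p + d)))) =
        mdet (colMat x) * ‖act C y‖ ^ 2 := by
  obtain ⟨Q, hQ, h0⟩ := exists_qr (Nat.le_add_right p d) (colMat x)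
  have hQ1 : Qᴴ * Q = 1 := by
    have := Matrix.mem_unitaryGroup_iff'.1 hQ
    rwa [star_eq_conjTranspose] at this
  have hQ2 : Q * Qᴴ = 1 := by
    have := Matrix.mem_unitaryGroup_iff.1 hQ
    rwa [star_eq_conjTranspose] at this
  let C : Matrix (Fin d) (Fin (p + d)) ℂ := Qᴴ.submatrix (Fin.natAdd p) id
  refine ⟨C, ?_, fun y => ?_⟩
  · ext i j
    have := congrFun (congrFun hQ1 (Fin.natAdd p i)) (Fin.natAdd p j)
    simp only [Matrix.mul_apply, conjTranspose_apply, Matrix.one_apply] at this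
    simp only [C, Matrix.mul_apply, submatrix_apply, conjTranspose_apply, id, Matrix.one_apply]
    simpa using this
  · let e : Fin p ⊕ Unit ≃ Fin (p + 1) :=
      (Equiv.optionEquivSumPUnit (Fin p)).symm.trans (finSuccEquiv p).symm
    have he1 : ∀ j, e (Sum.inl j) = j.succ := fun j => by simp [e]
    have he2 : e (Sum.inr ()) = 0 := by simp [e]
    set M := colMat (Fin.cons y x : Fin (p + 1) → EuclideanSpace ℂ (Fin (p + d))) with hM
    let R : Matrix (Fin p) (Fin p) ℂ := (Qᴴ * colMat x).submatrix (Fin.castAdd d) id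
    let w1 : Matrix (Fin p) Unit ℂ := Matrix.of fun i _ => act Qᴴ y (Fin.castAdd d i)
    let w2 : Matrix (Fin d) Unit ℂ := Matrix.of fun i _ => act C y i
    have hN : (Qᴴ * M).submatrix finSumFinEquiv e = fromBlocks R w1 0 w2 := by
      ext i j
      rcases i with i | i <;> rcases j with j | j
      · simp [he1, R, hM, colMat, Matrix.mul_apply]
      · simp [he2, w1, hM, colMat, Matrix.mul_apply, act_apply]
      · have := h0 (Fin.natAdd p i) j (by simp)
        simpa [he1, hM, colMat, Matrix.mul_apply] using this
      · simp [he2, w2, hM, colMat, Matrix.mul_apply, act_apply, C]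
    have hX : (Qᴴ * colMat x).submatrix finSumFinEquiv id = fromRows R 0 := by
      ext i j
      rcases i with i | i
      · simp [R]
      · have := h0 (Fin.natAdd p i) j (by simp)
        simpa using this
    have hw : (w2ᴴ * w2) = Matrix.of fun _ _ => ((‖act C y‖ ^ 2 : ℝ) : ℂ) := by
      ext i j
      simp [Matrix.mul_apply, w2, EuclideanSpace.norm_sq_eq, Complex.conj_mul']
    have hX2 : (mdet (colMat x) : ℂ) = det Rᴴ * det R := by
      rw [← mdet_unitary Qᴴ (by simpa using hQ2), (mdet_coe _).1]
      have : (Qᴴ * colMat x)ᴴ * (Qᴴ * colMat x) =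
          ((Qᴴ * colMat x).submatrix finSumFinEquiv id)ᴴ *
            (Qᴴ * colMat x).submatrix finSumFinEquiv id := by
        rw [conjTranspose_submatrix, submatrix_mul_equiv, submatrix_id_id]
      rw [this, hX, ← det_mul, conjTranspose_fromRows_eq_fromCols_conjTranspose, fromCols_mul_fromRows]
      simp
    have hM2 : (mdet M : ℂ) = det Rᴴ * det R * ((‖act C y‖ ^ 2 : ℝ) : ℂ) := by
      rw [← mdet_unitary Qᴴ (by simpa using hQ2), (mdet_coe _).1,
        ← det_submatrix_equiv_self e, ← submatrix_mul_equiv _ _ _ finSumFinEquiv,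
        ← conjTranspose_submatrix, hN]
      have : (fromBlocks R w1 0 w2)ᴴ * fromBlocks R w1 0 w2 =
          fromBlocks Rᴴ 0 w1ᴴ 1 * fromBlocks R w1 0 (w2ᴴ * w2) := by
        simp [fromBlocks_conjTranspose, fromBlocks_multiply]
      rw [this, det_mul, det_fromBlocks_zero₁₂, det_fromBlocks_zero₂₁, hw]
      simp [mul_assoc]
    rw [← hX2] at hM2
    exact_mod_cast hM2

lemma mdet_continuous {r p : ℕ} : Continuous (mdet : Matrix (Fin r) (Fin p) ℂ → ℝ) := by
  unfold mdet
  fun_prop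

lemma colMat_continuous {r p : ℕ} :
    Continuous (colMat : (Fin p → EuclideanSpace ℂ (Fin r)) → Matrix (Fin r) (Fin p) ℂ) := by
  unfold colMat
  refine continuous_matrix fun i j => ?_
  simp only [Matrix.of_apply]
  fun_prop


/-- Gaussian matrix measure, column by column. -/
noncomputable def gpi (r p : ℕ) : Measure (Fin p → EuclideanSpace ℂ (Fin r)) :=
  Measure.pi fun _ => gam r

instance (r p : ℕ) : IsProbabilityMeasure (gpi r p) := by unfold gpi; infer_instance

lemma gpi_split (r p : ℕ) :
    MeasurePreserving (fun g : Fin (p + 1) → EuclideanSpace ℂ (Fin r) => (Fin.tail g, g 0))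
      (gpi r (p + 1)) ((gpi r p).prod (gam r)) := by
  have h := measurePreserving_piFinSuccAbove (fun _ : Fin (p + 1) => gam r) 0
  exact (Measure.measurePreserving_swap (μ := gam r) (ν := gpi r p)).comp h

lemma mdet_col_measurable {r p : ℕ} : Measurable fun g : Fin p → EuclideanSpace ℂ (Fin r) =>
    mdet (colMat g) := (mdet_continuous.comp colMat_continuous).measurable

lemma cons_measurable {r p : ℕ} : Measurable
    fun z : (Fin p → EuclideanSpace ℂ (Fin r)) × EuclideanSpace ℂ (Fin r) =>
      (Fin.cons z.2 z.1 : Fin (p + 1) → EuclideanSpace ℂ (Fin r)) := by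
  rw [measurable_pi_iff]
  intro i
  refine Fin.cases ?_ (fun j => ?_) i
  · simpa using measurable_snd
  · simp only [Fin.cons_succ]
    fun_prop

theorem gpi_logdet (r p : ℕ) (hp : p ≤ r) :
    (∀ᵐ g ∂(gpi r p), mdet (colMat g) ≠ 0) ∧
    Integrable (fun g => Real.log (mdet (colMat g))) (gpi r p) ∧
    ∫ g, Real.log (mdet (colMat g)) ∂(gpi r p) = ∑ j ∈ Finset.range p, gA (r - j) := by
  induction p with
  | zero => 
    have : ∀ g : Fin 0 → EuclideanSpace ℂ (Fin r), mdet (colMat g) = 1 := by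
      intro g; simp [mdet]
    simp [this]
  | succ p ih =>
    obtain ⟨ih0, ih1, ih2⟩ := ih (by omega)
    obtain ⟨d, rfl⟩ : ∃ d, r = p + (d + 1) := ⟨r - p - 1, by omega⟩
    let D : (Fin p → EuclideanSpace ℂ (Fin (p + (d + 1)))) ×
        EuclideanSpace ℂ (Fin (p + (d + 1))) → ℝ := fun z =>
      mdet (colMat (Fin.cons z.2 z.1 : Fin (p + 1) → EuclideanSpace ℂ (Fin (p + (d + 1)))))
    have hD : Measurable D := mdet_col_measurable.comp cons_measurable
    let F1 : (Fin p → EuclideanSpace ℂ (Fin (p + (d + 1)))) ×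
        EuclideanSpace ℂ (Fin (p + (d + 1))) → ℝ := fun z => Real.log (mdet (colMat z.1))
    have hF1m : Measurable F1 :=
      Real.measurable_log.comp (mdet_col_measurable.comp measurable_fst)
    let F2 : (Fin p → EuclideanSpace ℂ (Fin (p + (d + 1)))) ×
        EuclideanSpace ℂ (Fin (p + (d + 1))) → ℝ := fun z => Real.log (D z) - F1 z
    have hF2m : Measurable F2 := (Real.measurable_log.comp hD).sub hF1m
    have hsplit := gpi_split (p + (d + 1)) p
    have hcomp : ∀ g : Fin (p + 1) → EuclideanSpace ℂ (Fin (p + (d + 1))),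
        mdet (colMat g) = D (Fin.tail g, g 0) := by
      intro g; simp [D]
    have haa : ∀ᵐ x ∂(gpi (p + (d + 1)) p), ∀ᵐ y ∂(gam (p + (d + 1))), D (x, y) ≠ 0 := by
      filter_upwards [ih0] with x hx
      obtain ⟨C, hC, hy⟩ := gram_step x
      filter_upwards [(gam_map C hC).quasiMeasurePreserving.ae (gam_ae_ne d)] with y hy0
      simp only [D, hy]
      have : 0 < ‖act C y‖ := norm_pos_iff.2 hy0
      exact mul_ne_zero hx (by positivity)
    have haep : ∀ᵐ z ∂((gpi (p + (d + 1)) p).prod (gam (p + (d + 1)))), D z ≠ 0 := by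
      rw [Measure.ae_prod_iff_ae_ae]
      · exact haa
      · exact hD (measurableSet_singleton 0).compl
    have hC : ∀ᵐ x ∂(gpi (p + (d + 1)) p), ∃ C : Matrix (Fin (d + 1)) (Fin (p + (d + 1))) ℂ,
        C * Cᴴ = 1 ∧ (fun y => F2 (x, y)) =ᵐ[gam (p + (d + 1))]
          fun y => Real.log (‖act C y‖ ^ 2) := by
      filter_upwards [ih0] with x hx
      obtain ⟨C, hC, hy⟩ := gram_step x
      refine ⟨C, hC, ?_⟩
      filter_upwards [(gam_map C hC).quasiMeasurePreserving.ae (gam_ae_ne d)] with y hy0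
      have : 0 < ‖act C y‖ := norm_pos_iff.2 hy0
      simp only [F2, D, F1, hy]
      rw [Real.log_mul hx (by positivity)]
      ring
    have hIntg : ∀ C : Matrix (Fin (d + 1)) (Fin (p + (d + 1))) ℂ, C * Cᴴ = 1 →
        Integrable (fun y => Real.log (‖act C y‖ ^ 2)) (gam (p + (d + 1))) := fun C h =>
      ((gam_map C h).integrable_comp (gam_log_integrable d).aestronglyMeasurable).2
        (gam_log_integrable d)
    have hmap : ∀ C : Matrix (Fin (d + 1)) (Fin (p + (d + 1))) ℂ, C * Cᴴ = 1 →
        ∀ f : EuclideanSpace ℂ (Fin (d + 1)) → ℝ, AEStronglyMeasurable f (gam (d + 1)) →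
        ∫ y, f (act C y) ∂(gam (p + (d + 1))) = ∫ y, f y ∂(gam (d + 1)) := by
      intro C h f hf
      have h2 := (gam_map C h)
      rw [← h2.map_eq, integral_map h2.measurable.aemeasurable (by rwa [h2.map_eq])]
    have hF2 : Integrable F2 ((gpi (p + (d + 1)) p).prod (gam (p + (d + 1)))) := by
      rw [integrable_prod_iff hF2m.aestronglyMeasurable]
      constructor
      · filter_upwards [hC] with x ⟨C, h, h'⟩
        exact (hIntg C h).congr h'.symm
      · have : (fun x => ∫ y, ‖F2 (x, y)‖ ∂(gam (p + (d + 1)))) =ᵐ[gpi (p + (d + 1)) p]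
            fun _ => ∫ y, ‖Real.log (‖y‖ ^ 2)‖ ∂(gam (d + 1)) := by
          filter_upwards [hC] with x ⟨C, h, h'⟩
          rw [← hmap C h _ (gam_log_integrable d).aestronglyMeasurable.norm]
          apply integral_congr_ae
          filter_upwards [h'] with y hy
          rw [hy]
        exact (integrable_const _).congr this.symm
    have hF2i : ∫ z, F2 z ∂((gpi (p + (d + 1)) p).prod (gam (p + (d + 1)))) = gA (d + 1) := by
      rw [integral_prod _ hF2]
      have : (fun x => ∫ y, F2 (x, y) ∂(gam (p + (d + 1)))) =ᵐ[gpi (p + (d + 1)) p]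
            fun _ => gA (d + 1) := by
        filter_upwards [hC] with x ⟨C, h, h'⟩
        rw [gA, ← hmap C h _ (gam_log_integrable d).aestronglyMeasurable]
        exact integral_congr_ae h'
      rw [integral_congr_ae this]
      simp
    have hF1 : Integrable F1 ((gpi (p + (d + 1)) p).prod (gam (p + (d + 1)))) := ih1.comp_fst _
    have hF1i : ∫ z, F1 z ∂((gpi (p + (d + 1)) p).prod (gam (p + (d + 1)))) =
        ∑ j ∈ Finset.range p, gA (p + (d + 1) - j) := by
      rw [← ih2, integral_prod _ hF1]
      simp [F1]
    have hlog : (fun z => Real.log (D z)) = fun z => F2 z + F1 z := by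
      ext z; simp [F2]
    have hlogI : Integrable (fun z => Real.log (D z))
        ((gpi (p + (d + 1)) p).prod (gam (p + (d + 1)))) := by
      rw [hlog]; exact hF2.add hF1
    simp only [hcomp]
    refine ⟨hsplit.quasiMeasurePreserving.ae haep,
      (hsplit.integrable_comp hlogI.aestronglyMeasurable).2 hlogI, ?_⟩
    have h3 : ∫ g, Real.log (D (Fin.tail g, g 0)) ∂(gpi (p + (d + 1)) (p + 1)) =
        ∫ z, Real.log (D z) ∂((gpi (p + (d + 1)) p).prod (gam (p + (d + 1)))) := by
      rw [← hsplit.map_eq, integral_map hsplit.measurable.aemeasurable]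
      rw [hsplit.map_eq]
      exact hlogI.aestronglyMeasurable
    rw [h3, hlog, integral_add hF2 hF1, hF2i, hF1i, Finset.sum_range_succ, add_comm]
    simp


instance unitary_sct (m : ℕ) : SecondCountableTopology (Matrix.unitaryGroup (Fin m) ℂ) := by
  have : SecondCountableTopology (Matrix (Fin m) (Fin m) ℂ) :=
    inferInstanceAs (SecondCountableTopology (Fin m → Fin m → ℂ))
  exact TopologicalSpace.Subtype.secondCountableTopology
    (Matrix.unitaryGroup (Fin m) ℂ : Set (Matrix (Fin m) (Fin m) ℂ))

instance unitary_lc (m : ℕ) : LocallyCompactSpace (Matrix.unitaryGroup (Fin m) ℂ) := by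
  have : LocallyCompactSpace (Matrix (Fin m) (Fin m) ℂ) :=
    inferInstanceAs (LocallyCompactSpace (Fin m → Fin m → ℂ))
  have h : IsClosed (Matrix.unitaryGroup (Fin m) ℂ : Set (Matrix (Fin m) (Fin m) ℂ)) :=
    isClosed_unitary
  exact h.isClosedEmbedding_subtypeVal.locallyCompactSpace

lemma haar_right {m : ℕ} (μ : Measure (Matrix.unitaryGroup (Fin m) ℂ))
    [μ.IsHaarMeasure] [IsProbabilityMeasure μ] (Q : Matrix.unitaryGroup (Fin m) ℂ) :
    MeasurePreserving (fun V => V * Q) μ μ := by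
  refine ⟨(continuous_mul_const Q).measurable, ?_⟩
  have : IsProbabilityMeasure (μ.map (fun V => V * Q)) :=
    Measure.isProbabilityMeasure_map (continuous_mul_const Q).aemeasurable
  have : (μ.map (fun V => V * Q)).IsHaarMeasure :=
    Measure.isHaarMeasure_map_mul_right _ Q
  exact Measure.isHaarMeasure_eq_of_isProbabilityMeasure _ _

/-- Upper rows of a unitary matrix. -/
noncomputable def topRows {m mr : ℕ} (hr : mr ≤ m) (U : Matrix.unitaryGroup (Fin m) ℂ) :
    Matrix (Fin mr) (Fin m) ℂ :=
  (U : Matrix (Fin m) (Fin m) ℂ).submatrix (Fin.castLE hr) id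

lemma topRows_coisom {m mr : ℕ} (hr : mr ≤ m) (U : Matrix.unitaryGroup (Fin m) ℂ) :
    topRows hr U * (topRows hr U)ᴴ = 1 := by
  have := Matrix.mem_unitaryGroup_iff.1 U.2
  rw [star_eq_conjTranspose] at this
  ext i j
  have := congrFun (congrFun this (Fin.castLE hr i)) (Fin.castLE hr j)
  simp only [Matrix.mul_apply, conjTranspose_apply, Matrix.one_apply] at this
  simp only [topRows, Matrix.mul_apply, submatrix_apply, conjTranspose_apply, id, Matrix.one_apply]
  simpa using this

lemma qr_jacobi {m mt mr : ℕ} (hr : mr ≤ m) (ht : mt ≤ m)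
    (g : Fin mt → EuclideanSpace ℂ (Fin m)) : ∃ Q : Matrix.unitaryGroup (Fin m) ℂ,
      ∀ V, mdet (topRows hr V * colMat g) =
        mdet (jacobiH m mt mr hr ht (V * Q)) * mdet (colMat g) := by
  obtain ⟨Q, hQ, h0⟩ := exists_qr ht (colMat g)
  have hQ2 : Q * Qᴴ = 1 := by
    have := Matrix.mem_unitaryGroup_iff.1 hQ
    rwa [star_eq_conjTranspose] at this
  let R : Matrix (Fin mt) (Fin mt) ℂ := (Qᴴ * colMat g).submatrix (Fin.castLE ht) id
  have hmul : ∀ {k : ℕ} (A : Matrix (Fin k) (Fin m) ℂ),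
      A * (Qᴴ * colMat g) = A.submatrix id (Fin.castLE ht) * R := by
    intro k A
    ext i j
    rw [Matrix.mul_apply, Matrix.mul_apply]
    symm
    refine Finset.sum_of_injOn (Fin.castLE ht) ?_ ?_ ?_ ?_
    · exact (Fin.castLE_injective ht).injOn
    · intro _ _; simp
    · intro l _ hl
      rw [h0 l j, mul_zero]
      by_contra hlt
      exact hl ⟨⟨l, by omega⟩, by simp, by ext; simp⟩
    · intro l _
      simp [R]
  have hR : mdet (colMat g) = mdet R := by
    rw [← mdet_unitary Qᴴ (by simpa using hQ2)]
    have := hmul (Qᴴ * colMat g)ᴴ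
    rw [mdet, mdet, this]
    congr 3
  refine ⟨⟨Q, hQ⟩, fun V => ?_⟩
  have hg : colMat g = Q * (Qᴴ * colMat g) := by
    rw [← Matrix.mul_assoc, hQ2, Matrix.one_mul]
  rw [hR, ← mdet_mul, hg, ← Matrix.mul_assoc, hmul]
  rfl

lemma topRows_continuous {m mr : ℕ} (hr : mr ≤ m) :
    Continuous (topRows hr : Matrix.unitaryGroup (Fin m) ℂ → _) := by
  unfold topRows
  exact Continuous.matrix_submatrix continuous_subtype_val _ _

lemma jacobiH_continuous {m mt mr : ℕ} (hr : mr ≤ m) (ht : mt ≤ m) :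
    Continuous (jacobiH m mt mr hr ht) := by
  unfold jacobiH
  exact Continuous.matrix_submatrix continuous_subtype_val _ _

theorem haar_logdet {m mt mr : ℕ} (hr : mr ≤ m) (ht : mt ≤ m) (h1 : mt ≤ mr)
    (μ : Measure (Matrix.unitaryGroup (Fin m) ℂ)) [μ.IsHaarMeasure] [IsProbabilityMeasure μ] :
    (∀ᵐ V ∂μ, mdet (jacobiH m mt mr hr ht V) ≠ 0) ∧
    Integrable (fun V => Real.log (mdet (jacobiH m mt mr hr ht V))) μ ∧
    ∫ V, Real.log (mdet (jacobiH m mt mr hr ht V)) ∂μ =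
      ∑ j ∈ Finset.range mt, (gA (mr - j) - gA (m - j)) := by
  obtain ⟨a0, a1, a2⟩ := gpi_logdet mr mt h1
  obtain ⟨b0, b1, b2⟩ := gpi_logdet m mt ht
  set h : Matrix.unitaryGroup (Fin m) ℂ → ℝ := fun V => mdet (jacobiH m mt mr hr ht V) with hh
  have hhm : Measurable h := (mdet_continuous.comp (jacobiH_continuous hr ht)).measurable
  let P : Matrix.unitaryGroup (Fin m) ℂ × (Fin mt → EuclideanSpace ℂ (Fin m)) → ℝ :=
    fun z => mdet (topRows hr z.1 * colMat z.2)
  have hP : Measurable P := by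
    apply Continuous.measurable
    apply mdet_continuous.comp
    exact Continuous.matrix_mul ((topRows_continuous hr).comp continuous_fst)
      (colMat_continuous.comp continuous_snd)
  have hmp : ∀ V, MeasurePreserving (fun (g : Fin mt → EuclideanSpace ℂ (Fin m)) j =>
      act (topRows hr V) (g j)) (gpi m mt) (gpi mr mt) := fun V =>
    measurePreserving_pi _ _ fun _ => gam_map _ (topRows_coisom hr V)
  have hPe : ∀ V g, P (V, g) = mdet (colMat (fun j => act (topRows hr V) (g j))) := by
    intro V g; simp only [P, colMat_act]
  have hmapI : ∀ V (f : (Fin mt → EuclideanSpace ℂ (Fin mr)) → ℝ),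
      AEStronglyMeasurable f (gpi mr mt) →
      ∫ g, f (fun j => act (topRows hr V) (g j)) ∂(gpi m mt) = ∫ g, f g ∂(gpi mr mt) := by
    intro V f hf
    have h2 := hmp V
    rw [← h2.map_eq, integral_map h2.measurable.aemeasurable (by rwa [h2.map_eq])]
  have hlogP : Measurable fun z => Real.log (P z) := Real.measurable_log.comp hP
  have hIntg : Integrable (fun z => Real.log (P z)) (μ.prod (gpi m mt)) := by
    rw [integrable_prod_iff hlogP.aestronglyMeasurable]
    constructor
    · refine Filter.Eventually.of_forall fun V => ?_
      simp only [hPe]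
      exact ((hmp V).integrable_comp a1.aestronglyMeasurable).2 a1
    · simp only [hPe]
      have : ∀ V, ∫ g, ‖Real.log (mdet (colMat (fun j => act (topRows hr V) (g j))))‖
          ∂(gpi m mt) = ∫ g, ‖Real.log (mdet (colMat g))‖ ∂(gpi mr mt) := fun V =>
        hmapI V _ a1.aestronglyMeasurable.norm
      simp only [this]
      exact integrable_const _
  have hI1 : ∫ z, Real.log (P z) ∂(μ.prod (gpi m mt)) = ∑ j ∈ Finset.range mt, gA (mr - j) := by
    rw [integral_prod _ hIntg]
    simp only [hPe]
    have : ∀ V, ∫ g, Real.log (mdet (colMat (fun j => act (topRows hr V) (g j))))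
          ∂(gpi m mt) = ∫ g, Real.log (mdet (colMat g)) ∂(gpi mr mt) := fun V =>
        hmapI V _ a1.aestronglyMeasurable
    simp only [this, a2]
    simp
  have hae : ∀ᵐ g ∂(gpi m mt), ∀ᵐ V ∂μ, P (V, g) ≠ 0 := by
    rw [← Measure.ae_ae_comm (p := fun V g => P (V, g) ≠ 0)]
    · refine Filter.Eventually.of_forall fun V => ?_
      simp only [hPe]
      exact (hmp V).quasiMeasurePreserving.ae a0
    · exact hP (measurableSet_singleton 0).compl
  -- one good `g`
  have hh0 : ∀ᵐ V ∂μ, h V ≠ 0 := by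
    obtain ⟨g, hg⟩ := hae.exists
    obtain ⟨Q, hQ⟩ := qr_jacobi hr ht g
    have h3 := (haar_right μ Q⁻¹).quasiMeasurePreserving.ae hg
    filter_upwards [h3] with V hV
    simp only [P, hQ, inv_mul_cancel_right] at hV
    exact left_ne_zero_of_mul hV
  have hkey : ∀ᵐ g ∂(gpi m mt), ∃ Q : Matrix.unitaryGroup (Fin m) ℂ,
      (fun V => Real.log (P (V, g))) =ᵐ[μ]
        fun V => Real.log (h (V * Q)) + Real.log (mdet (colMat g)) := by
    filter_upwards [b0] with g hg
    obtain ⟨Q, hQ⟩ := qr_jacobi hr ht g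
    refine ⟨Q, ?_⟩
    filter_upwards [(haar_right μ Q).quasiMeasurePreserving.ae hh0] with V hV
    simp only [P, hQ]
    exact Real.log_mul hV hg
  have hlogh : Measurable fun V => Real.log (h V) := Real.measurable_log.comp hhm
  have hhI : Integrable (fun V => Real.log (h V)) μ := by
    obtain ⟨g, ⟨Q, hQ⟩, hg⟩ := (hkey.and hIntg.prod_left_ae).exists
    have h4 := (hg.congr hQ).sub (integrable_const (Real.log (mdet (colMat g))))
    have h5 : Integrable (fun V => Real.log (h (V * Q))) μ := by
      refine h4.congr (Filter.Eventually.of_forall fun V => ?_)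
      simp
    exact ((haar_right μ Q).integrable_comp hlogh.aestronglyMeasurable).1 h5
  refine ⟨hh0, hhI, ?_⟩
  have hI2 : ∫ z, Real.log (P z) ∂(μ.prod (gpi m mt)) =
      ∫ V, Real.log (h V) ∂μ + ∑ j ∈ Finset.range mt, gA (m - j) := by
    rw [integral_prod_symm _ hIntg, ← b2]
    have : (fun g => ∫ V, Real.log (P (V, g)) ∂μ) =ᵐ[gpi m mt]
        fun g => ∫ V, Real.log (h V) ∂μ + Real.log (mdet (colMat g)) := by
      filter_upwards [hkey] with g ⟨Q, hQ⟩
      rw [integral_congr_ae hQ, integral_add _ (integrable_const _)]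
      · have h6 := haar_right μ Q
        congr 1
        · conv_rhs => rw [← h6.map_eq]
          rw [integral_map h6.measurable.aemeasurable hlogh.aestronglyMeasurable]
        · simp
      · exact ((haar_right μ Q).integrable_comp hlogh.aestronglyMeasurable).2 hhI
    rw [integral_congr_ae this, integral_add (integrable_const _) b1]
    simp
  rw [Finset.sum_sub_distrib]
  linarith


lemma gA_diff (n K : ℕ) :
    gA (n + 1) - gA (n + 1 + K) = -∑ k ∈ Finset.range K, 1 / ((n : ℝ) + 1 + k) := by
  rw [show n + 1 + K = (n + K) + 1 by omega, gA_eq, gA_eq]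
  induction K with
  | zero => simp
  | succ K ih =>
    rw [Finset.sum_range_succ, neg_add, ← ih, ← add_assoc, harmonic_succ]
    push_cast
    rw [one_div, show (n : ℝ) + K + 1 = n + 1 + K by ring]
    ring

open scoped ComplexOrder in
lemma exists_eig {r p : ℕ} (H : Matrix (Fin r) (Fin p) ℂ) : ∃ a : Fin p → ℝ, (∀ i, 0 ≤ a i) ∧
    mdet H = ∏ i, a i ∧
    ∀ s : ℝ, (det ((1 : Matrix (Fin p) (Fin p) ℂ) + (s : ℂ) • (Hᴴ * H))).re =
      ∏ i, (1 + s * a i) := by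
  have hA := posSemidef_conjTranspose_mul_self H
  refine ⟨hA.1.eigenvalues, hA.eigenvalues_nonneg, ?_, fun s => ?_⟩
  · rw [mdet, hA.1.det_eq_prod_eigenvalues]
    have : (∏ i, (hA.1.eigenvalues i : ℂ)) = ((∏ i, hA.1.eigenvalues i : ℝ) : ℂ) := by
      push_cast; rfl
    erw [this, Complex.ofReal_re]
  · have hsp := hA.1.spectral_theorem
    set V := hA.1.eigenvectorUnitary
    have h1 : (1 : Matrix (Fin p) (Fin p) ℂ) + (s : ℂ) • (Hᴴ * H) =
        (V : Matrix (Fin p) (Fin p) ℂ) * diagonal (fun i => ((1 + s * hA.1.eigenvalues i : ℝ) : ℂ))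
          * star (V : Matrix (Fin p) (Fin p) ℂ) := by
      have h2 : diagonal (fun i => ((1 + s * hA.1.eigenvalues i : ℝ) : ℂ)) =
          1 + (s : ℂ) • diagonal (RCLike.ofReal ∘ hA.1.eigenvalues) := by
        ext i j
        by_cases hij : i = j
        · subst hij; simp
        · simp [hij]
      have hV : (V : Matrix (Fin p) (Fin p) ℂ) * star (V : Matrix (Fin p) (Fin p) ℂ) = 1 :=
        Matrix.mem_unitaryGroup_iff.1 V.2
      rw [h2, Matrix.mul_add, Matrix.add_mul, Matrix.mul_one, hV]
      conv_lhs => rw [hsp]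
      simp [Unitary.conjStarAlgAut_apply]
    have hV : (V : Matrix (Fin p) (Fin p) ℂ).det * (star (V : Matrix (Fin p) (Fin p) ℂ)).det
        = 1 := by
      rw [← det_mul, Matrix.mem_unitaryGroup_iff.1 V.2, det_one]
    rw [h1, det_mul, det_mul, mul_right_comm, hV, one_mul, det_diagonal, ← Complex.ofReal_prod,
      Complex.ofReal_re]

lemma unitary_compact {m : ℕ} (μ : Measure (Matrix.unitaryGroup (Fin m) ℂ))
    [μ.IsHaarMeasure] [IsProbabilityMeasure μ] : CompactSpace (Matrix.unitaryGroup (Fin m) ℂ) := by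
  by_contra H
  rw [not_compactSpace_iff] at H
  simpa using measure_univ_of_isMulLeftInvariant μ

theorem capacity_limit {m mt mr : ℕ} (hr : mr ≤ m) (ht : mt ≤ m)
    (μ : Measure (Matrix.unitaryGroup (Fin m) ℂ)) [μ.IsHaarMeasure] [IsProbabilityMeasure μ]
    (h0 : ∀ᵐ V ∂μ, mdet (jacobiH m mt mr hr ht V) ≠ 0)
    (hI : Integrable (fun V => Real.log (mdet (jacobiH m mt mr hr ht V))) μ) :
    Filter.Tendsto (fun s : ℝ => ergodicCapacity m mt mr hr ht s μ - (mt : ℝ) * Real.log s)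
      Filter.atTop (nhds (∫ V, Real.log (mdet (jacobiH m mt mr hr ht V)) ∂μ)) := by
  have : CompactSpace (Matrix.unitaryGroup (Fin m) ℂ) := unitary_compact μ
  let G : ℝ → Matrix.unitaryGroup (Fin m) ℂ → ℝ := fun s U =>
    (Matrix.det ((1 : Matrix (Fin mt) (Fin mt) ℂ) +
      (s : ℂ) • ((jacobiH m mt mr hr ht U)ᴴ * jacobiH m mt mr hr ht U))).re
  have hGc : ∀ s, Continuous (G s) := by
    intro s
    have := jacobiH_continuous (m := m) hr ht
    simp only [G]
    fun_prop
  have hGpos : ∀ s, 0 ≤ s → ∀ U, 0 < G s U := by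
    intro s hs U
    obtain ⟨a, ha, -, h2⟩ := exists_eig (jacobiH m mt mr hr ht U)
    simp only [G, h2]
    exact Finset.prod_pos fun i _ => by have := ha i; positivity
  have hLc : ∀ s, 0 ≤ s → Continuous fun U => Real.log (G s U) := fun s hs =>
    (hGc s).log fun U => (hGpos s hs U).ne'
  obtain ⟨K, hK⟩ := isCompact_univ.exists_bound_of_continuousOn (hLc 1 zero_le_one).continuousOn
  have hGI : ∀ s, 0 ≤ s → Integrable (fun U => Real.log (G s U)) μ := by
    intro s hs
    obtain ⟨K', hK'⟩ := isCompact_univ.exists_bound_of_continuousOn (hLc s hs).continuousOn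
    exact Integrable.of_bound (hLc s hs).aestronglyMeasurable K'
      (Filter.Eventually.of_forall fun U => hK' U (Set.mem_univ _))
  have hscale : ∀ s, 0 < s → ∀ U, ∀ a : Fin mt → ℝ, (∀ i, 0 ≤ a i) →
      (G s U = ∏ i, (1 + s * a i)) →
      Real.log (G s U) - mt * Real.log s = Real.log (∏ i, (s⁻¹ + a i)) := by
    intro s hs U a ha h
    have : G s U = s ^ mt * ∏ i, (s⁻¹ + a i) := by
      rw [h]
      have : s ^ mt = ∏ i : Fin mt, s := by simp
      rw [this, ← Finset.prod_mul_distrib]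
      refine Finset.prod_congr rfl fun i _ => ?_
      field_simp
    rw [this, Real.log_mul (by positivity), Real.log_pow]
    · ring
    · exact (Finset.prod_pos fun i _ => by have := ha i; positivity).ne'
  have hlim : Filter.Tendsto (fun s : ℝ => ∫ U, (Real.log (G s U) - mt * Real.log s) ∂μ)
      Filter.atTop (nhds (∫ V, Real.log (mdet (jacobiH m mt mr hr ht V)) ∂μ)) := by
    refine tendsto_integral_filter_of_dominated_convergence
      (fun V => |Real.log (mdet (jacobiH m mt mr hr ht V))| + K) ?_ ?_ ?_ ?_
    · filter_upwards [Filter.eventually_ge_atTop 0] with s hs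
      exact ((hLc s hs).sub continuous_const).aestronglyMeasurable
    · filter_upwards [Filter.eventually_ge_atTop 1] with s hs
      filter_upwards [h0] with U hU
      obtain ⟨a, ha, h1, h2⟩ := exists_eig (jacobiH m mt mr hr ht U)
      have hs0 : 0 < s := by linarith
      rw [hscale s hs0 U a ha (h2 s), h1]
      rw [h1] at hU
      have hpos : 0 < ∏ i, a i := lt_of_le_of_ne (Finset.prod_nonneg fun i _ => ha i) hU.symm
      have hsi : s⁻¹ ≤ 1 := inv_le_one_of_one_le₀ hs
      have hsi0 : 0 < s⁻¹ := by positivity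
      have l1 : ∏ i, a i ≤ ∏ i, (s⁻¹ + a i) :=
        Finset.prod_le_prod (fun i _ => ha i) fun i _ => by linarith
      have l2 : ∏ i, (s⁻¹ + a i) ≤ G 1 U := by
        simp only [G, h2]
        exact Finset.prod_le_prod (fun i _ => by have := ha i; positivity)
          fun i _ => by linarith
      have l3 := Real.log_le_log hpos l1
      have l4 := Real.log_le_log (hpos.trans_le l1) l2
      have l5 := hK U (Set.mem_univ _)
      rw [Real.norm_eq_abs] at l5 ⊢
      have l6 := abs_le.1 l5
      rw [abs_le]
      have l7 := neg_abs_le (Real.log (∏ i, a i))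
      have l8 := abs_nonneg (Real.log (∏ i, a i))
      have l9 := abs_nonneg (Real.log (G 1 U))
      constructor <;> linarith [l6.1, l6.2]
    · exact hI.abs.add (integrable_const _)
    · filter_upwards [h0] with U hU
      obtain ⟨a, ha, h1, h2⟩ := exists_eig (jacobiH m mt mr hr ht U)
      rw [h1] at hU ⊢
      have : Filter.Tendsto (fun s : ℝ => Real.log (∏ i, (s⁻¹ + a i))) Filter.atTop
          (nhds (Real.log (∏ i, a i))) := by
        refine Filter.Tendsto.log ?_ hU
        refine tendsto_finsetProd _ fun i _ => ?_
        simpa using tendsto_inv_atTop_zero.add_const (a i)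
      refine this.congr' ?_
      filter_upwards [Filter.eventually_gt_atTop 0] with s hs
      rw [hscale s hs U a ha (h2 s)]
  refine hlim.congr' ?_
  filter_upwards [Filter.eventually_ge_atTop 0] with s hs
  rw [integral_sub (hGI s hs) (integrable_const _)]
  simp [ergodicCapacity, G]


/-- **High-SNR asymptotics of the ergodic capacity of the MIMO Jacobi fading channel.**
If `mt ≤ mr` and `mt + mr ≤ m`, then
`C(s) − mt · ln s → − Σ_{j<mt} Σ_{k<m−mr} 1/(mr + k − j)` as `s → ∞`, where
`C(s) = E[ln det (I + s · Hᴴ H)]` with expectation over the Haar probability measure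
on the unitary group `U(m)`. -/
theorem jacobi_ergodic_capacity_high_snr
    (m mt mr : ℕ) (hm : 0 < m) (hmt : 0 < mt) (hmr : 0 < mr)
    (h1 : mt ≤ mr) (h2 : mt + mr ≤ m)
    (μ : Measure (Matrix.unitaryGroup (Fin m) ℂ))
    [μ.IsHaarMeasure] [IsProbabilityMeasure μ] :
    Filter.Tendsto
      (fun s : ℝ => ergodicCapacity m mt mr (le_trans (Nat.le_add_left mr mt) h2)
          (le_trans (Nat.le_add_right mt mr) h2) s μ - (mt : ℝ) * Real.log s)
      Filter.atTop
      (nhds (-(∑ j ∈ Finset.range mt, ∑ k ∈ Finset.range (m - mr),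
          1 / ((mr : ℝ) + k - j)))) := by
  have hr : mr ≤ m := le_trans (Nat.le_add_left mr mt) h2
  have ht : mt ≤ m := le_trans (Nat.le_add_right mt mr) h2
  obtain ⟨c0, c1, c2⟩ := haar_logdet hr ht h1 μ
  have hlim := capacity_limit hr ht μ c0 c1
  have hsum : ∑ j ∈ Finset.range mt, (gA (mr - j) - gA (m - j)) =
      -(∑ j ∈ Finset.range mt, ∑ k ∈ Finset.range (m - mr), 1 / ((mr : ℝ) + k - j)) := by
    rw [← Finset.sum_neg_distrib]
    refine Finset.sum_congr rfl fun j hj => ?_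
    have hj' := Finset.mem_range.1 hj
    obtain ⟨n, hn⟩ : ∃ n, mr = n + 1 + j := ⟨mr - j - 1, by omega⟩
    rw [show mr - j = n + 1 by omega, show m - j = n + 1 + (m - mr) by omega, gA_diff]
    congr 1
    refine Finset.sum_congr rfl fun k _ => ?_
    congr 1
    rw [hn]
    push_cast
    ring
  rw [c2, hsum] at hlim
  exact hlim
end

section
/- Let m, m_t, m_r be positive integers with m_t ≤ m_r and m_t + m_r ≤ m. Let U be Haar distributed on the unitary group U(m) and let H be the upper-left m_r×m_t block of U. Then det(HᴴH) > 0 almost surely and E[ln det(HᴴH)] = − Σ_{j=0}^{m_t−1} Σ_{k=0}^{m−m_r−1} 1/(m_r + k − j). Equivalently, E[ln det(HᴴH)] = Σ_{j=0}^{m_t−1} (H_{m_r−j−1} − H_{m−j−1}), where H_n denotes the n-th harmonic number (this is the digamma expression Σ_{j=0}^{m_t−1} (ψ(m_r−j) − ψ(m−j))). -/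
open MeasureTheory Matrix

namespace JacobiAux

abbrev UG (n : ℕ) := Matrix.unitaryGroup (Fin n) ℂ

instance secondCountable_UG (n : ℕ) : SecondCountableTopology (UG n) := by
  have : SecondCountableTopology (Matrix (Fin n) (Fin n) ℂ) :=
    inferInstanceAs (SecondCountableTopology (Fin n → Fin n → ℂ))
  exact TopologicalSpace.Subtype.secondCountableTopology _

instance compactSpace_UG (n : ℕ) : CompactSpace (UG n) := by
  refine (isCompact_iff_compactSpace (s := (Matrix.unitaryGroup (Fin n) ℂ : Set (Matrix (Fin n) (Fin n) ℂ)))).mp ?_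
  have hK : IsCompact (X := Matrix (Fin n) (Fin n) ℂ) (Set.pi Set.univ (fun _ : Fin n =>
      Set.pi Set.univ (fun _ : Fin n => Metric.closedBall (0:ℂ) 1))) :=
    isCompact_univ_pi (fun _ : Fin n =>
      isCompact_univ_pi (fun _ : Fin n => isCompact_closedBall (0:ℂ) 1))
  refine hK.of_isClosed_subset ?_ ?_
  · exact isClosed_unitary
  · intro U hU i _
    simp only [Set.mem_pi, Set.mem_univ, forall_true_left, mem_closedBall_zero_iff]
    intro j
    exact entry_norm_bound_of_unitary hU i j

section
variable {n : ℕ} (μ : Measure (UG n)) [μ.IsHaarMeasure] [IsProbabilityMeasure μ]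

lemma map_mul_right (g : UG n) : Measure.map (fun x => x * g) μ = μ := by
  have : (Measure.map (fun x => x * g) μ).IsHaarMeasure := inferInstance
  have hp : IsProbabilityMeasure (Measure.map (fun x => x * g) μ) :=
    Measure.isProbabilityMeasure_map (continuous_mul_const g).aemeasurable
  exact Measure.isHaarMeasure_eq_of_isProbabilityMeasure _ _

lemma rightInv : μ.IsMulRightInvariant := ⟨map_mul_right μ⟩

lemma map_inv' : Measure.map (fun x => x⁻¹) μ = μ := by
  have := rightInv μ
  have : (Measure.map (fun x => x⁻¹) μ).IsMulLeftInvariant :=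
    inferInstanceAs (μ.inv.IsMulLeftInvariant)
  have hp : IsProbabilityMeasure (Measure.map (fun x : UG n => x⁻¹) μ) :=
    Measure.isProbabilityMeasure_map continuous_inv.aemeasurable
  have h1 := Measure.isMulInvariant_eq_smul_of_compactSpace (Measure.map (fun x : UG n => x⁻¹) μ) μ
  have h2 := congrArg (fun ν => ν Set.univ) h1
  simp only [measure_univ, Measure.smul_apply] at h2
  rw [h1]
  have h3 : ((Measure.map (fun x : UG n => x⁻¹) μ).haarScalarFactor μ) = 1 := by
    simpa [ENNReal.smul_def] using h2.symm
  rw [h3, one_smul]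

end

noncomputable def haarU (n : ℕ) : Measure (UG n) := Measure.haarMeasure ⊤
instance (n : ℕ) : (haarU n).IsHaarMeasure := by unfold haarU; infer_instance
instance (n : ℕ) : IsProbabilityMeasure (haarU n) := by
  constructor
  have := Measure.haarMeasure_self (K₀ := (⊤ : TopologicalSpace.PositiveCompacts (UG n)))
  simpa [haarU] using this

noncomputable def gdet {r t : ℕ} (H : Matrix (Fin r) (Fin t) ℂ) : ℝ := (Matrix.det (Hᴴ * H)).re

open scoped ComplexOrder in
lemma gdet_coe {r t : ℕ} (H : Matrix (Fin r) (Fin t) ℂ) :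
    (Matrix.det (Hᴴ * H)) = (gdet H : ℂ) := by
  have h := (Matrix.posSemidef_conjTranspose_mul_self H).det_nonneg
  rw [Complex.nonneg_iff] at h
  apply Complex.ext
  · simp [gdet]
  · simpa using h.2.symm

open scoped ComplexOrder in
lemma gdet_nonneg {r t : ℕ} (H : Matrix (Fin r) (Fin t) ℂ) : 0 ≤ gdet H := by
  have h := (Matrix.posSemidef_conjTranspose_mul_self H).det_nonneg
  rw [Complex.nonneg_iff] at h
  exact h.1

lemma gdet_mul {r t : ℕ} (H : Matrix (Fin r) (Fin t) ℂ) (T : Matrix (Fin t) (Fin t) ℂ) :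
    gdet (H * T) = ‖T.det‖ ^ 2 * gdet H := by
  have h : (gdet (H * T) : ℂ) = (‖T.det‖ ^ 2 * gdet H : ℝ) := by
    rw [← gdet_coe, Matrix.conjTranspose_mul, Matrix.mul_assoc, ← Matrix.mul_assoc Hᴴ,
      Matrix.det_mul, Matrix.det_mul, gdet_coe, Matrix.det_conjTranspose]
    push_cast
    rw [← Complex.conj_mul']
    simp only [Complex.star_def]
    ring
  exact_mod_cast h

lemma full_isometry {s t : ℕ} (ht : t ≤ s) (W : UG s) :
    (jacobiH s t s le_rfl ht W)ᴴ * jacobiH s t s le_rfl ht W = 1 := by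
  have h := Matrix.UnitaryGroup.star_mul_self W
  ext i j
  have h' := congrFun (congrFun h (Fin.castLE ht i)) (Fin.castLE ht j)
  simp only [Matrix.mul_apply, Matrix.one_apply, Matrix.star_apply, Fin.castLE_inj] at h'
  simpa [jacobiH, Matrix.mul_apply, Matrix.one_apply] using h'

lemma gdet_full {s t : ℕ} (ht : t ≤ s) (W : UG s) : gdet (jacobiH s t s le_rfl ht W) = 1 := by
  simp [gdet, full_isometry]

lemma exists_factor {s t : ℕ} (ht : t ≤ s) (H : Matrix (Fin s) (Fin t) ℂ) :
    ∃ W : UG s, ∃ T : Matrix (Fin t) (Fin t) ℂ, H = jacobiH s t s le_rfl ht W * T := by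
  let f : Fin s → EuclideanSpace ℂ (Fin s) := fun j =>
    if h : j.1 < t then WithLp.toLp 2 (fun i => H i ⟨j, h⟩) else 0
  have hfr : Module.finrank ℂ (EuclideanSpace ℂ (Fin s)) = Fintype.card (Fin s) := by simp
  let b := InnerProductSpace.gramSchmidtOrthonormalBasis hfr f
  refine ⟨⟨(EuclideanSpace.basisFun (Fin s) ℂ).toBasis.toMatrix b,
    OrthonormalBasis.toMatrix_orthonormalBasis_mem_unitary _ _⟩,
    Matrix.of fun i j => b.repr (f (Fin.castLE ht j)) (Fin.castLE ht i), ?_⟩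
  ext i j
  have h1 : H i j = (f (Fin.castLE ht j)) i := by simp [f]
  have h2 := congrArg (fun v : EuclideanSpace ℂ (Fin s) => v i) (b.sum_repr (f (Fin.castLE ht j)))
  rw [h1, ← h2]
  simp only [Matrix.mul_apply, jacobiH, Matrix.submatrix_apply, Matrix.of_apply]
  simp only [WithLp.ofLp_sum, Finset.sum_apply, PiLp.smul_apply, smul_eq_mul]
  symm
  refine Finset.sum_of_injOn (Fin.castLE ht) (fun a _ b _ h => Fin.castLE_injective ht h)
    (by simp [Set.MapsTo]) ?_ ?_
  · intro l _ hl
    have : Fin.castLE ht j < l := by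
      rw [Fin.lt_def]
      by_contra hc
      apply hl
      refine ⟨⟨l.1, ?_⟩, by simp, by ext; simp⟩
      have := j.2
      simp at hc
      omega
    have h0 := InnerProductSpace.gramSchmidtOrthonormalBasis_inv_triangular' hfr f this
    change b.repr (f (Fin.castLE ht j)) l = 0 at h0
    rw [h0, zero_mul]
  · intro l _
    simp [Module.Basis.toMatrix_apply, mul_comm]

/-- Block embedding of `U(s)` in `U(s+k)`. -/
noncomputable def emb (s k : ℕ) (V : UG s) : UG (s + k) :=
  ⟨(Matrix.fromBlocks (V : Matrix (Fin s) (Fin s) ℂ) 0 0 (1 : Matrix (Fin k) (Fin k) ℂ)).submatrix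
      finSumFinEquiv.symm finSumFinEquiv.symm, by
    have h := Matrix.UnitaryGroup.star_mul_self V
    rw [Matrix.mem_unitaryGroup_iff', Matrix.star_eq_conjTranspose, Matrix.conjTranspose_submatrix,
      Matrix.submatrix_mul_equiv, Matrix.fromBlocks_conjTranspose, Matrix.fromBlocks_multiply]
    rw [Matrix.star_eq_conjTranspose] at h
    simp [h]⟩

lemma continuous_emb (s k : ℕ) : Continuous (emb s k) := by
  unfold emb
  refine Continuous.subtype_mk ?_ _
  refine Continuous.matrix_submatrix ?_ _ _
  exact Continuous.matrix_fromBlocks continuous_subtype_val continuous_const continuous_const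
    continuous_const

lemma emb_mul_rows {s k t r : ℕ} (hr : r ≤ s) (ht : t ≤ s + k) (V : UG s) (U : UG (s + k)) :
    jacobiH (s + k) t r (hr.trans (Nat.le_add_right s k)) ht (emb s k V * U)
      = (V : Matrix (Fin s) (Fin s) ℂ).submatrix (Fin.castLE hr) id *
        jacobiH (s + k) t s (Nat.le_add_right s k) ht U := by
  ext i j
  simp only [jacobiH, Matrix.submatrix_apply, Matrix.mul_apply, Submonoid.coe_mul, emb]
  rw [Fin.sum_univ_add]
  have h1 : ∀ i : Fin r, Fin.castLE (hr.trans (Nat.le_add_right s k)) i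
      = Fin.castAdd k (Fin.castLE hr i) := fun i => rfl
  have h2 : ∀ i : Fin s, Fin.castLE (Nat.le_add_right s k) i = Fin.castAdd k i := fun i => rfl
  simp [h1, h2]

lemma key_factor {s k t : ℕ} (ht : t ≤ s) (U : UG (s + k)) :
    ∃ W : UG s, ∀ (V : UG s) (r : ℕ) (hr : r ≤ s),
      gdet (jacobiH (s + k) t r (hr.trans (Nat.le_add_right s k)) (ht.trans (Nat.le_add_right s k))
        (emb s k V * U)) =
      gdet (jacobiH (s + k) t s (Nat.le_add_right s k) (ht.trans (Nat.le_add_right s k)) U) *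
        gdet (jacobiH s t r hr ht (V * W)) := by
  obtain ⟨W, T, hWT⟩ := exists_factor ht
    (jacobiH (s + k) t s (Nat.le_add_right s k) (ht.trans (Nat.le_add_right s k)) U)
  refine ⟨W, fun V r hr => ?_⟩
  rw [emb_mul_rows hr, hWT, gdet_mul, gdet_full, mul_one, ← Matrix.mul_assoc, gdet_mul]
  congr 2

/-- complementary minor -/
lemma gdet_compl {r t : ℕ} (ht : t ≤ r + 1) (V : UG (r + 1)) :
    gdet (jacobiH (r + 1) t r (Nat.le_succ r) ht V) =
      1 - ∑ j : Fin t, ‖(V : Matrix _ _ ℂ) (Fin.last r) (Fin.castLE ht j)‖ ^ 2 := by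
  have h := full_isometry ht V
  let u : Fin t → ℂ := fun j => (V : Matrix _ _ ℂ) (Fin.last r) (Fin.castLE ht j)
  have h2 : (jacobiH (r + 1) t r (Nat.le_succ r) ht V)ᴴ * jacobiH (r + 1) t r (Nat.le_succ r) ht V
      = 1 - Matrix.replicateCol (Fin 1) (star u) * Matrix.replicateRow (Fin 1) u := by
    rw [← h]
    ext i j
    simp only [jacobiH, Matrix.mul_apply, Matrix.sub_apply, Matrix.conjTranspose_apply,
      Matrix.submatrix_apply, Matrix.replicateCol_apply, Matrix.replicateRow_apply,
      Fin.sum_univ_castSucc (n := r)]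
    simp [u]
    rfl
  rw [gdet, h2, Matrix.det_one_sub_mul_comm, Matrix.det_fin_one]
  simp only [Matrix.sub_apply, Matrix.mul_apply, Matrix.one_apply_eq, Matrix.replicateRow_apply,
    Matrix.replicateCol_apply, Complex.sub_re, Complex.one_re, Complex.re_sum]
  congr 1
  refine Finset.sum_congr rfl fun j _ => ?_
  simp only [u, Pi.star_apply, Complex.star_def]
  rw [Complex.mul_conj']
  norm_cast

section moments

lemma continuous_entry {n : ℕ} (a b : Fin n) :
    Continuous (fun U : UG n => (U : Matrix (Fin n) (Fin n) ℂ) a b) :=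
  continuous_subtype_val.matrix_elem a b

lemma integrable_cont {n : ℕ} (μ : Measure (UG n)) [IsProbabilityMeasure μ] {f : UG n → ℝ}
    (hf : Continuous f) : Integrable f μ :=
  hf.integrable_of_hasCompactSupport (HasCompactSupport.of_compactSpace _)

variable {r : ℕ} (μ : Measure (UG (r + 1))) [μ.IsHaarMeasure] [IsProbabilityMeasure μ]

/-- The moments. -/
noncomputable def mom (p : ℕ) : ℝ := ∫ U : UG (r + 1), (‖(U : Matrix (Fin (r + 1)) (Fin (r + 1)) ℂ) 0 0‖ ^ 2) ^ p ∂μ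

lemma mom_lin (p : ℕ) (w : Fin (r + 1) → ℂ) :
    ∫ U : UG (r + 1), (‖∑ l, w l * (U : Matrix (Fin (r + 1)) (Fin (r + 1)) ℂ) l 0‖ ^ 2) ^ p ∂μ
      = (∑ l, ‖w l‖ ^ 2) ^ p * mom μ p := by
  have h1 : 1 ≤ r + 1 := by omega
  let H : Matrix (Fin (r + 1)) (Fin 1) ℂ := Matrix.of fun i _ => w i
  obtain ⟨W, T, hWT⟩ := exists_factor h1 H
  have hw : ∀ l, w l = (W : Matrix (Fin (r + 1)) (Fin (r + 1)) ℂ) l 0 * T 0 0 := by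
    intro l
    have := congrFun (congrFun hWT l) 0
    simpa [H, jacobiH, Matrix.mul_apply] using this
  have hT : (∑ l, ‖w l‖ ^ 2) = ‖T 0 0‖ ^ 2 := by
    have h := congrArg gdet hWT
    rw [gdet_mul, gdet_full, mul_one, Matrix.det_fin_one] at h
    rw [← h]
    simp only [gdet, H, Matrix.det_fin_one, Matrix.mul_apply, Matrix.conjTranspose_apply,
      Matrix.of_apply, Complex.re_sum, Complex.star_def]
    refine Finset.sum_congr rfl fun j _ => ?_
    rw [Complex.conj_mul']
    norm_cast
  have hWt : (W : Matrix (Fin (r + 1)) (Fin (r + 1)) ℂ)ᵀ ∈ Matrix.unitaryGroup (Fin (r + 1)) ℂ :=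
    Matrix.transpose_mem_unitaryGroup_iff.mpr W.2
  let G : UG (r + 1) := ⟨_, hWt⟩
  have h2 := integral_mul_left_eq_self (μ := μ)
    (fun U : UG (r + 1) => (‖(U : Matrix (Fin (r + 1)) (Fin (r + 1)) ℂ) 0 0‖ ^ 2) ^ p) G
  rw [mom, ← h2, hT, ← integral_const_mul]
  congr 1
  ext U
  rw [← mul_pow, ← mul_pow, ← norm_mul]
  congr 3
  simp only [G, Submonoid.coe_mul, Matrix.mul_apply, Matrix.transpose_apply, Finset.mul_sum]
  refine Finset.sum_congr rfl fun j _ => ?_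
  rw [hw]; ring

open Polynomial in
lemma coeff_quad (A x B : ℝ) (p : ℕ) :
    ((C A + C x * X + C B * X ^ 2) ^ p : ℝ[X]).coeff 0 = A ^ p ∧
    ((C A + C x * X + C B * X ^ 2) ^ p : ℝ[X]).coeff 1 = p * A ^ (p - 1) * x ∧
    ((C A + C x * X + C B * X ^ 2) ^ p : ℝ[X]).coeff 2 =
      p * A ^ (p - 1) * B + p * (p - 1) / 2 * A ^ (p - 2) * x ^ 2 := by
  induction p with
  | zero => simp [coeff_one]
  | succ p ih =>
    obtain ⟨h0, h1, h2⟩ := ih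
    set P := ((C A + C x * X + C B * X ^ 2) ^ p : ℝ[X])
    have e : ((C A + C x * X + C B * X ^ 2) ^ (p + 1) : ℝ[X])
        = C A * P + C x * (P * X) + C B * (P * X ^ 2) := by
      rw [pow_succ]; ring
    rw [e]
    have c0 : (P * X).coeff 0 = 0 := by simp
    have c1 : (P * X).coeff 1 = P.coeff 0 := coeff_mul_X P 0
    have c2 : (P * X).coeff 2 = P.coeff 1 := coeff_mul_X P 1
    have d0 : (P * X ^ 2).coeff 0 = 0 := by simp
    have d1 : (P * X ^ 2).coeff 1 = 0 := by rw [coeff_mul_X_pow']; simp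
    have d2 : (P * X ^ 2).coeff 2 = P.coeff 0 := by rw [coeff_mul_X_pow']; simp
    simp only [coeff_add, coeff_C_mul, c0, c1, c2, d0, d1, d2, h0, h1, h2]
    refine ⟨by ring, ?_, ?_⟩
    · rcases p with _ | p
      · simp
      · push_cast; simp; ring
    · rcases p with _ | p
      · simp
      · rcases p with _ | p
        · norm_num; ring
        · push_cast
          try simp only [show p + 1 + 1 - 1 = p + 1 by omega, show p + 1 + 1 - 2 = p by omega,
            show p + 1 + 1 + 1 - 1 = p + 2 by omega, show p + 1 + 1 + 1 - 2 = p + 1 by omega]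
          ring

open Polynomial in
lemma exists_weights (N : ℕ) : ∃ w : ℕ → ℝ, ∀ P : ℝ[X], P.natDegree < N →
    P.coeff 2 = ∑ i ∈ Finset.range N, w i * P.eval (i : ℝ) := by
  refine ⟨fun i => (Lagrange.basis (Finset.range N) (fun i : ℕ => (i : ℝ)) i).coeff 2, ?_⟩
  intro P hP
  have hd : P.degree < ((Finset.range N).card : WithBot ℕ) := by
    rw [Finset.card_range]
    exact lt_of_le_of_lt degree_le_natDegree (by exact_mod_cast hP)
  have h := Lagrange.eq_interpolate (s := Finset.range N) (v := fun i : ℕ => (i : ℝ)) (f := P)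
    (fun a _ b _ h => by simpa using h) hd
  rw [Lagrange.interpolate_apply] at h
  conv_lhs => rw [h]
  rw [finsetSum_coeff]
  refine Finset.sum_congr rfl fun i _ => ?_
  rw [coeff_C_mul, mul_comm]

open Polynomial in
lemma natDegree_quad (A x B : ℝ) (p : ℕ) :
    ((C A + C x * X + C B * X ^ 2) ^ p : ℝ[X]).natDegree < 2 * p + 1 := by
  have : (C A + C x * X + C B * X ^ 2 : ℝ[X]).natDegree ≤ 2 := by compute_degree
  calc _ ≤ p * 2 := natDegree_pow_le_of_le p this
    _ < _ := by omega

lemma normsq_lin (u v : ℂ) (t : ℝ) :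
    ‖u + (t : ℂ) * v‖ ^ 2 = ‖u‖ ^ 2 + 2 * (u.re * v.re + u.im * v.im) * t + ‖v‖ ^ 2 * t ^ 2 := by
  simp only [← Complex.normSq_eq_norm_sq, Complex.normSq_apply]
  simp; ring

lemma normsq_lin' (u v : ℂ) (t : ℝ) :
    ‖u + ((t : ℂ) * Complex.I) * v‖ ^ 2
      = ‖u‖ ^ 2 + 2 * (u.im * v.re - u.re * v.im) * t + ‖v‖ ^ 2 * t ^ 2 := by
  simp only [← Complex.normSq_eq_norm_sq, Complex.normSq_apply]
  simp; ring

lemma mom_two (p : ℕ) (a b : Fin (r + 1)) (hab : a ≠ b) (z : ℂ) :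
    ∫ U : UG (r + 1), (‖(U : Matrix (Fin (r + 1)) (Fin (r + 1)) ℂ) a 0 + z * (U : Matrix (Fin (r + 1)) (Fin (r + 1)) ℂ) b 0‖ ^ 2) ^ p ∂μ
      = (1 + ‖z‖ ^ 2) ^ p * mom μ p := by
  have h := mom_lin μ p (fun l => if l = a then 1 else if l = b then z else 0)
  have e : ∀ f : Fin (r + 1) → ℂ, (∑ l, (if l = a then 1 else if l = b then z else 0) * f l)
      = f a + z * f b := by
    intro f
    rw [Finset.sum_eq_add (a := a) (b := b) hab]
    · simp [hab.symm]
    · intro c _ hc; simp [hc.1, hc.2]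
    · simp
    · simp
  have e2 : (∑ l, ‖(if l = a then 1 else if l = b then z else 0 : ℂ)‖ ^ 2) = 1 + ‖z‖ ^ 2 := by
    rw [Finset.sum_eq_add (a := a) (b := b) hab]
    · simp [hab.symm]
    · intro c _ hc; simp [hc.1, hc.2]
    · simp
    · simp
  rw [e2] at h
  rw [← h]
  congr 1
  ext U
  rw [e]

lemma mom_one (p : ℕ) (a : Fin (r + 1)) :
    ∫ U : UG (r + 1), (‖(U : Matrix (Fin (r + 1)) (Fin (r + 1)) ℂ) a 0‖ ^ 2) ^ p ∂μ = mom μ p := by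
  have h := mom_lin μ p (fun l => if l = a then 1 else 0)
  have e2 : (∑ l, ‖(if l = a then 1 else 0 : ℂ)‖ ^ 2) = 1 := by
    rw [Finset.sum_eq_single a] <;> simp +contextual
  rw [e2] at h
  simpa using h

open Polynomial in
lemma mom_mixed (p : ℕ) (a b : Fin (r + 1)) (hab : a ≠ b) :
    ((p : ℝ) + 1) * ∫ U : UG (r + 1), (‖(U : Matrix (Fin (r + 1)) (Fin (r + 1)) ℂ) a 0‖ ^ 2) ^ p *
      ‖(U : Matrix (Fin (r + 1)) (Fin (r + 1)) ℂ) b 0‖ ^ 2 ∂μ = mom μ (p + 1) := by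
  obtain ⟨w, hw⟩ := exists_weights (2 * (p + 1) + 1)
  let A : UG (r + 1) → ℝ := fun U => ‖(U : Matrix (Fin (r + 1)) (Fin (r + 1)) ℂ) a 0‖ ^ 2
  let B : UG (r + 1) → ℝ := fun U => ‖(U : Matrix (Fin (r + 1)) (Fin (r + 1)) ℂ) b 0‖ ^ 2
  let x : UG (r + 1) → ℝ := fun U => 2 * (((U : Matrix (Fin (r + 1)) (Fin (r + 1)) ℂ) a 0).re * ((U : Matrix (Fin (r + 1)) (Fin (r + 1)) ℂ) b 0).re
    + ((U : Matrix (Fin (r + 1)) (Fin (r + 1)) ℂ) a 0).im * ((U : Matrix (Fin (r + 1)) (Fin (r + 1)) ℂ) b 0).im)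
  let y : UG (r + 1) → ℝ := fun U => 2 * (((U : Matrix (Fin (r + 1)) (Fin (r + 1)) ℂ) a 0).im * ((U : Matrix (Fin (r + 1)) (Fin (r + 1)) ℂ) b 0).re
    - ((U : Matrix (Fin (r + 1)) (Fin (r + 1)) ℂ) a 0).re * ((U : Matrix (Fin (r + 1)) (Fin (r + 1)) ℂ) b 0).im)
  have hxy : ∀ U, x U ^ 2 + y U ^ 2 = 4 * A U * B U := by
    intro U
    simp only [x, y, A, B, ← Complex.normSq_eq_norm_sq, Complex.normSq_apply]
    ring
  let P : UG (r + 1) → ℝ[X] := fun U => (C (A U) + C (x U) * X + C (B U) * X ^ 2) ^ (p + 1)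
  let Q : UG (r + 1) → ℝ[X] := fun U => (C (A U) + C (y U) * X + C (B U) * X ^ 2) ^ (p + 1)
  let R : ℝ[X] := (C 1 + C 0 * X + C 1 * X ^ 2) ^ (p + 1)
  have hP : ∀ U (t : ℝ), (P U).eval t = (‖(U : Matrix (Fin (r + 1)) (Fin (r + 1)) ℂ) a 0 + (t : ℂ) *
      (U : Matrix (Fin (r + 1)) (Fin (r + 1)) ℂ) b 0‖ ^ 2) ^ (p + 1) := by
    intro U t
    rw [normsq_lin]
    simp [P, A, B, x]
  have hQ : ∀ U (t : ℝ), (Q U).eval t = (‖(U : Matrix (Fin (r + 1)) (Fin (r + 1)) ℂ) a 0 + ((t : ℂ) * Complex.I) *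
      (U : Matrix (Fin (r + 1)) (Fin (r + 1)) ℂ) b 0‖ ^ 2) ^ (p + 1) := by
    intro U t
    rw [normsq_lin']
    simp [Q, A, B, y]
  have hR : ∀ t : ℝ, R.eval t = (1 + t ^ 2) ^ (p + 1) := by
    intro t; simp [R]
  have iP : ∀ t : ℝ, Integrable (fun U => (P U).eval t) μ := by
    intro t
    simp only [hP]
    apply integrable_cont
    exact (((continuous_entry a (0 : Fin (r + 1))).add (continuous_const.mul
      (continuous_entry b (0 : Fin (r + 1))))).norm.pow 2).pow _
  have iQ : ∀ t : ℝ, Integrable (fun U => (Q U).eval t) μ := by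
    intro t
    simp only [hQ]
    apply integrable_cont
    exact (((continuous_entry a (0 : Fin (r + 1))).add (continuous_const.mul
      (continuous_entry b (0 : Fin (r + 1))))).norm.pow 2).pow _
  have eP : ∀ t : ℝ, ∫ U, (P U).eval t ∂μ = R.eval t * mom μ (p + 1) := by
    intro t
    simp only [hP, hR]
    rw [mom_two μ _ a b hab]
    simp
  have eQ : ∀ t : ℝ, ∫ U, (Q U).eval t ∂μ = R.eval t * mom μ (p + 1) := by
    intro t
    simp only [hQ, hR]
    rw [mom_two μ _ a b hab]
    simp
  have key : ∫ U, ((P U).coeff 2 + (Q U).coeff 2) ∂μ = 2 * (R.coeff 2 * mom μ (p + 1)) := by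
    have : ∀ U, (P U).coeff 2 + (Q U).coeff 2 = ∑ i ∈ Finset.range (2 * (p + 1) + 1),
        (w i * (P U).eval (i : ℝ) + w i * (Q U).eval (i : ℝ)) := by
      intro U
      rw [hw _ (natDegree_quad _ _ _ _), hw _ (natDegree_quad _ _ _ _), Finset.sum_add_distrib]
    simp only [this]
    rw [integral_finsetSum]
    · rw [hw R (natDegree_quad _ _ _ _), Finset.sum_mul, Finset.mul_sum]
      refine Finset.sum_congr rfl fun i _ => ?_
      rw [integral_add ((iP _).const_mul _) ((iQ _).const_mul _), integral_const_mul,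
        integral_const_mul, eP, eQ]
      ring
    · intro i _
      exact ((iP _).const_mul _).add ((iQ _).const_mul _)
  have c1 : ∀ U, (P U).coeff 2 + (Q U).coeff 2 = 2 * ((p : ℝ) + 1) ^ 2 * (A U ^ p * B U) := by
    intro U
    rw [(coeff_quad _ _ _ _).2.2, (coeff_quad _ _ _ _).2.2]
    have hh := hxy U
    rcases p with _ | p
    · simp; ring
    · simp only [show p + 1 + 1 - 1 = p + 1 by omega, show p + 1 + 1 - 2 = p by omega]
      push_cast
      have : y U ^ 2 = 4 * A U * B U - x U ^ 2 := by linarith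
      rw [this]
      ring
  have c2 : R.coeff 2 = (p : ℝ) + 1 := by
    rw [(coeff_quad _ _ _ _).2.2]; simp
  simp only [c1, c2] at key
  rw [integral_const_mul] at key
  have hp : (p : ℝ) + 1 ≠ 0 := by positivity
  apply mul_left_cancel₀ hp
  simp only [A, B] at key
  linarith

lemma mom_zero : mom μ 0 = 1 := by simp [mom]

lemma mom_nonneg (p : ℕ) : 0 ≤ mom μ p := integral_nonneg fun U => by positivity

lemma mom_rec (p : ℕ) :
    ((p : ℝ) + 1) * (mom μ p - mom μ (p + 1)) = r * mom μ (p + 1) := by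
  have cont : ∀ b : Fin (r + 1), Continuous (fun U : UG (r + 1) =>
      (‖(U : Matrix (Fin (r + 1)) (Fin (r + 1)) ℂ) 0 0‖ ^ 2) ^ p * ‖(U : Matrix (Fin (r + 1)) (Fin (r + 1)) ℂ) b 0‖ ^ 2) := by
    intro b
    exact (((continuous_entry (0 : Fin (r + 1)) (0 : Fin (r + 1))).norm.pow 2).pow p).mul
      ((continuous_entry b (0 : Fin (r + 1))).norm.pow 2)
  have hsum : ∀ U : UG (r + 1), ∑ b, ‖(U : Matrix (Fin (r + 1)) (Fin (r + 1)) ℂ) b 0‖ ^ 2 = 1 := by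
    intro U
    have h := gdet_full (show 1 ≤ r + 1 by omega) U
    rw [← h]
    simp only [gdet, Matrix.det_fin_one, Matrix.mul_apply, Matrix.conjTranspose_apply,
      Complex.re_sum, Complex.star_def, jacobiH, Matrix.submatrix_apply]
    refine Finset.sum_congr rfl fun j _ => ?_
    rw [Complex.conj_mul']
    norm_cast
  have h1 : mom μ p = ∑ b, ∫ U : UG (r + 1), (‖(U : Matrix (Fin (r + 1)) (Fin (r + 1)) ℂ) 0 0‖ ^ 2) ^ p *
      ‖(U : Matrix (Fin (r + 1)) (Fin (r + 1)) ℂ) b 0‖ ^ 2 ∂μ := by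
    rw [← integral_finsetSum _ (fun b _ => integrable_cont μ (cont b))]
    simp only [← Finset.mul_sum, hsum, mul_one]
    rfl
  rw [Fin.sum_univ_succ] at h1
  have h2 : ∫ U : UG (r + 1), (‖(U : Matrix (Fin (r + 1)) (Fin (r + 1)) ℂ) 0 0‖ ^ 2) ^ p *
      ‖(U : Matrix (Fin (r + 1)) (Fin (r + 1)) ℂ) 0 0‖ ^ 2 ∂μ = mom μ (p + 1) := by
    simp only [mom, pow_succ]
  rw [h2] at h1
  have h3 : mom μ p - mom μ (p + 1) = ∑ b : Fin r, ∫ U : UG (r + 1),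
    (‖(U : Matrix (Fin (r + 1)) (Fin (r + 1)) ℂ) 0 0‖ ^ 2) ^ p * ‖(U : Matrix (Fin (r + 1)) (Fin (r + 1)) ℂ) b.succ 0‖ ^ 2 ∂μ := by linarith
  rw [h3, Finset.mul_sum]
  simp only [mom_mixed μ p 0 _ (Fin.succ_ne_zero _).symm]
  simp

lemma mom_le (hr : 1 ≤ r) (p : ℕ) : mom μ p ≤ 1 / ((p : ℝ) + 1) := by
  induction p with
  | zero => simp [mom_zero]
  | succ p ih =>
    have h := mom_rec μ p
    have hn := mom_nonneg μ (p + 1)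
    have hr' : (1 : ℝ) ≤ r := by exact_mod_cast hr
    push_cast
    rw [le_div_iff₀ (by positivity)] at ih ⊢
    nlinarith

lemma mom_hasSum (hr : 1 ≤ r) :
    HasSum (fun p : ℕ => mom μ (p + 1) / ((p : ℝ) + 1)) (1 / (r : ℝ)) := by
  have hr' : (r : ℝ) ≠ 0 := by positivity
  have he : ∀ p : ℕ, mom μ (p + 1) / ((p : ℝ) + 1) = (mom μ p - mom μ (p + 1)) / r := by
    intro p
    have := mom_rec μ p
    field_simp
    linarith
  rw [hasSum_iff_tendsto_nat_of_nonneg (fun p => by have := mom_nonneg μ (p + 1); positivity)]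
  have hs : ∀ N : ℕ, ∑ p ∈ Finset.range N, mom μ (p + 1) / ((p : ℝ) + 1) = (1 - mom μ N) / r := by
    intro N
    simp only [he]
    rw [← Finset.sum_div, Finset.sum_range_sub', mom_zero]
  simp only [hs]
  have hlim : Filter.Tendsto (fun N => mom μ N) Filter.atTop (nhds 0) :=
    squeeze_zero (mom_nonneg μ) (mom_le μ hr) tendsto_one_div_add_atTop_nhds_zero_nat
  have := (hlim.const_sub 1).div_const (r : ℝ)
  simpa using this

end moments

section main

/-- `-log` with values in `[0, ∞]`. -/
noncomputable def nl (x : ℝ) : ENNReal := if x ≤ 0 then ⊤ else ENNReal.ofReal (-Real.log x)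

lemma measurable_nl : Measurable nl := by
  unfold nl
  exact Measurable.ite measurableSet_Iic measurable_const
    (ENNReal.measurable_ofReal.comp Real.measurable_log.neg)

lemma nl_mul {x y : ℝ} (hx : 0 ≤ x) (hx1 : x ≤ 1) (hy : 0 ≤ y) (hy1 : y ≤ 1) :
    nl (x * y) = nl x + nl y := by
  rcases hx.eq_or_lt with rfl | hx
  · simp [nl]
  rcases hy.eq_or_lt with rfl | hy
  · simp [nl]
  have hxy := mul_pos hx hy
  rw [nl, nl, nl, if_neg hx.not_ge, if_neg hy.not_ge, if_neg hxy.not_ge,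
    ← ENNReal.ofReal_add, Real.log_mul hx.ne' hy.ne', neg_add]
  · linarith [Real.log_nonpos hx.le hx1]
  · linarith [Real.log_nonpos hy.le hy1]

lemma nl_one_sub {x : ℝ} (hx : 0 ≤ x) (hx1 : x ≤ 1) :
    nl (1 - x) = ∑' p : ℕ, ENNReal.ofReal (x ^ (p + 1) / ((p : ℝ) + 1)) := by
  rcases hx1.eq_or_lt with rfl | hx1
  · rw [nl, if_pos (by simp)]
    symm
    by_contra h
    have h2 := ENNReal.summable_toReal h
    have h3 : Summable (fun p : ℕ => 1 / ((p : ℝ) + 1)) := by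
      refine h2.congr fun p => ?_
      rw [ENNReal.toReal_ofReal (by positivity)]
      simp
    have h4 := (summable_nat_add_iff (f := fun p : ℕ => 1 / (p : ℝ)) 1).mp (by
      refine h3.congr fun p => ?_
      push_cast; rfl)
    exact Real.not_summable_one_div_natCast h4
  · have h := Real.hasSum_pow_div_log_of_abs_lt_one (x := x) (by rwa [abs_of_nonneg hx])
    rw [nl, if_neg (by linarith), ← h.tsum_eq,
      ENNReal.ofReal_tsum_of_nonneg (fun p => by positivity) h.summable]

lemma continuous_gdet {m t r : ℕ} (hr : r ≤ m) (ht : t ≤ m) :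
    Continuous (fun U : UG m => gdet (jacobiH m t r hr ht U)) := by
  have h : Continuous (fun U : UG m => jacobiH m t r hr ht U) :=
    continuous_subtype_val.matrix_submatrix _ _
  exact Complex.continuous_re.comp (h.matrix_conjTranspose.matrix_mul h).matrix_det

lemma emb_one (s k : ℕ) : emb s k 1 = 1 := by
  apply Subtype.ext
  simp [emb]

lemma gdet_compl_le_one {r t : ℕ} (ht : t ≤ r + 1) (V : UG (r + 1)) :
    gdet (jacobiH (r + 1) t r (Nat.le_succ r) ht V) ≤ 1 := by
  rw [gdet_compl]
  have : 0 ≤ ∑ j : Fin t, ‖(V : Matrix (Fin (r + 1)) (Fin (r + 1)) ℂ) (Fin.last r)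
    (Fin.castLE ht j)‖ ^ 2 := by positivity
  linarith

lemma gdet_le_one (t k : ℕ) : ∀ (r m : ℕ) (hm : m = r + k) (htr : t ≤ r) (hr : r ≤ m) (ht : t ≤ m)
    (U : UG m), gdet (jacobiH m t r hr ht U) ≤ 1 := by
  induction k with
  | zero =>
    intro r m hm htr hr ht U
    obtain rfl : m = r := by omega
    rw [gdet_full]
  | succ k ih =>
    intro r m hm htr hr ht U
    obtain rfl : m = (r + 1) + k := by omega
    obtain ⟨W, hW⟩ := key_factor (s := r + 1) (k := k) (t := t) (by omega) U
    have h := hW 1 r (Nat.le_succ r)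
    rw [emb_one, one_mul, one_mul] at h
    rw [h]
    exact mul_le_one₀ (ih (r + 1) _ rfl (by omega) _ _ U) (gdet_nonneg _)
      (gdet_compl_le_one _ _)

/-- The expectation of `-log det`. -/
noncomputable def EL {m : ℕ} (μ : Measure (UG m)) (t r : ℕ) (hr : r ≤ m) (ht : t ≤ m) : ENNReal :=
  ∫⁻ U, nl (gdet (jacobiH m t r hr ht U)) ∂μ

lemma EL_rec {r k t : ℕ} (htr : t ≤ r) (μ : Measure (UG (r + 1 + k))) [μ.IsHaarMeasure]
    [IsProbabilityMeasure μ] (h1 : r ≤ r + 1 + k) (h2 : t ≤ r + 1 + k) (h3 : r + 1 ≤ r + 1 + k)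
    (h4 : r ≤ r + 1) (h5 : t ≤ r + 1) :
    EL μ t r h1 h2 = EL μ t (r + 1) h3 h2 + EL (haarU (r + 1)) t r h4 h5 := by
  have := rightInv (haarU (r + 1))
  have e1 : EL μ t r h1 h2 = ∫⁻ V, ∫⁻ U, nl (gdet (jacobiH (r + 1 + k) t r h1 h2
      (emb (r + 1) k V * U))) ∂μ ∂(haarU (r + 1)) := by
    have : ∀ V, ∫⁻ U, nl (gdet (jacobiH (r + 1 + k) t r h1 h2
      (emb (r + 1) k V * U))) ∂μ = EL μ t r h1 h2 := fun V =>
      lintegral_mul_left_eq_self (μ := μ) (fun U => nl (gdet (jacobiH (r + 1 + k) t r h1 h2 U))) _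
    simp [this]
  rw [e1, lintegral_lintegral_swap]
  · have e2 : ∀ U : UG (r + 1 + k), ∫⁻ V, nl (gdet (jacobiH (r + 1 + k) t r h1 h2
        (emb (r + 1) k V * U))) ∂(haarU (r + 1)) =
        nl (gdet (jacobiH (r + 1 + k) t (r + 1) h3 h2 U)) + EL (haarU (r + 1)) t r h4 h5 := by
      intro U
      obtain ⟨W, hW⟩ := key_factor (s := r + 1) (k := k) (t := t) h5 U
      have e3 : ∀ V : UG (r + 1), nl (gdet (jacobiH (r + 1 + k) t r h1 h2 (emb (r + 1) k V * U)))
          = nl (gdet (jacobiH (r + 1 + k) t (r + 1) h3 h2 U)) +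
            nl (gdet (jacobiH (r + 1) t r h4 h5 (V * W))) := by
        intro V
        rw [hW V r h4, nl_mul (gdet_nonneg _) (gdet_le_one t k _ _ rfl h5 _ _ _) (gdet_nonneg _)
          (gdet_compl_le_one _ _)]
      simp only [e3]
      rw [lintegral_add_left measurable_const,
        lintegral_mul_right_eq_self (fun V => nl (gdet (jacobiH (r + 1) t r h4 h5 V))) W]
      simp [EL]
    simp only [e2]
    rw [lintegral_add_right _ measurable_const]
    simp [EL]
  · refine (measurable_nl.comp ?_).aemeasurable
    refine Continuous.measurable ?_
    exact (continuous_gdet h1 h2).comp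
      (((continuous_emb (r + 1) k).comp continuous_fst).mul continuous_snd)

lemma EL_base {r : ℕ} (hr : 1 ≤ r) (μ : Measure (UG (r + 1))) [μ.IsHaarMeasure]
    [IsProbabilityMeasure μ] (h1 : r ≤ r + 1) (h2 : 1 ≤ r + 1) :
    EL μ 1 r h1 h2 = ENNReal.ofReal (1 / (r : ℝ)) := by
  have e1 : ∀ U : UG (r + 1), nl (gdet (jacobiH (r + 1) 1 r h1 h2 U)) = ∑' p : ℕ,
      ENNReal.ofReal ((‖(U : Matrix (Fin (r + 1)) (Fin (r + 1)) ℂ) (Fin.last r) 0‖ ^ 2) ^ (p + 1)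
        / ((p : ℝ) + 1)) := by
    intro U
    rw [gdet_compl, ← nl_one_sub (by positivity)]
    · simp
    · exact pow_le_one₀ (norm_nonneg _) (entry_norm_bound_of_unitary U.2 _ _)
  have hc : ∀ p : ℕ, Continuous (fun U : UG (r + 1) =>
      (‖(U : Matrix (Fin (r + 1)) (Fin (r + 1)) ℂ) (Fin.last r) 0‖ ^ 2) ^ (p + 1)
        / ((p : ℝ) + 1)) := fun p =>
    (((continuous_entry (Fin.last r) (0 : Fin (r + 1))).norm.pow 2).pow _).div_const _
  have hs := mom_hasSum μ hr
  rw [EL]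
  simp only [e1]
  rw [lintegral_tsum (fun p => (hc p).measurable.ennreal_ofReal.aemeasurable),
    ← hs.tsum_eq, ENNReal.ofReal_tsum_of_nonneg _ hs.summable]
  · congr 1
    ext p
    rw [← ofReal_integral_eq_lintegral_ofReal (integrable_cont μ (hc p))
      (Filter.Eventually.of_forall fun U => by positivity), integral_div, mom_one]
  · intro p
    have := mom_nonneg μ (p + 1)
    positivity

lemma EL_full {m t : ℕ} (μ : Measure (UG m)) (h1 : m ≤ m) (h2 : t ≤ m) : EL μ t m h1 h2 = 0 := by
  simp [EL, gdet_full, nl]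

lemma EL_one (k : ℕ) : ∀ (r m : ℕ) (hm : m = r + k) (hr : 1 ≤ r) (μ : Measure (UG m))
    [μ.IsHaarMeasure] [IsProbabilityMeasure μ] (h1 : r ≤ m) (h2 : 1 ≤ m),
    EL μ 1 r h1 h2 = ENNReal.ofReal (∑ i ∈ Finset.range k, 1 / ((r : ℝ) + i)) := by
  induction k with
  | zero =>
    intro r m hm hr μ _ _ h1 h2
    obtain rfl : m = r := by omega
    simp [EL_full]
  | succ k ih =>
    intro r m hm hr μ _ _ h1 h2
    obtain rfl : m = (r + 1) + k := by omega
    rw [EL_rec hr μ h1 h2 (by omega) (by omega) (by omega), EL_base hr,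
      ih (r + 1) _ rfl (by omega), ← ENNReal.ofReal_add
        (Finset.sum_nonneg fun i _ => by positivity) (by positivity),
      Finset.sum_range_succ']
    congr 1
    push_cast
    simp only [add_zero]
    congr 1
    refine Finset.sum_congr rfl fun i _ => ?_
    congr 1
    ring

/-- The reversal permutation matrix. -/
noncomputable def revU (n : ℕ) : UG n :=
  ⟨(Fin.revPerm : Equiv.Perm (Fin n)).permMatrix ℂ, by
    rw [Matrix.mem_unitaryGroup_iff, Matrix.star_eq_conjTranspose, Matrix.conjTranspose_permMatrix,
      ← Matrix.permMatrix_mul]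
    simp⟩

lemma rev_entry {n : ℕ} (V : UG n) (i j : Fin n) :
    ((revU n * V⁻¹ * revU n : UG n) : Matrix (Fin n) (Fin n) ℂ) i j
      = star ((V : Matrix (Fin n) (Fin n) ℂ) j.rev i.rev) := by
  simp only [Submonoid.coe_mul, revU, Matrix.UnitaryGroup.inv_val]
  rw [Equiv.Perm.permMatrix, PEquiv.toMatrix_toPEquiv_mul, PEquiv.mul_toMatrix_toPEquiv]
  simp [Matrix.star_apply]

lemma EL_swap {r t : ℕ} (htr : t ≤ r) (μ : Measure (UG (r + 1))) [μ.IsHaarMeasure]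
    [IsProbabilityMeasure μ] (h1 : r ≤ r + 1) (h2 : t ≤ r + 1) (h3 : r + 1 - t ≤ r + 1)
    (h4 : 1 ≤ r + 1) :
    EL μ t r h1 h2 = EL μ 1 (r + 1 - t) h3 h4 := by
  have := rightInv μ
  let F : UG (r + 1) → ENNReal := fun U => nl (gdet (jacobiH (r + 1) 1 (r + 1 - t) h3 h4 U))
  have hF : Measurable F := measurable_nl.comp (continuous_gdet h3 h4).measurable
  have e : ∫⁻ U, F (revU (r + 1) * U⁻¹ * revU (r + 1)) ∂μ = ∫⁻ U, F U ∂μ := by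
    have i1 : ∫⁻ U, F (revU (r + 1) * U⁻¹ * revU (r + 1)) ∂μ =
        ∫⁻ U, F (revU (r + 1) * U * revU (r + 1)) ∂(Measure.map (fun x => x⁻¹) μ) := by
      rw [lintegral_map (f := fun U => F (revU (r + 1) * U * revU (r + 1)))]
      · exact hF.comp (Continuous.measurable
          ((continuous_const.mul continuous_id).mul continuous_const))
      · exact continuous_inv.measurable
    rw [i1, map_inv' μ, lintegral_mul_left_eq_self (fun U => F (U * revU (r + 1))),
      lintegral_mul_right_eq_self]
  change _ = ∫⁻ U, F U ∂μ
  rw [← e]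
  unfold EL
  refine lintegral_congr fun V => ?_
  simp only [F]
  congr 1
  rw [gdet_compl]
  have hfull : ∑ j : Fin (r + 1), ‖(V : Matrix (Fin (r + 1)) (Fin (r + 1)) ℂ) (Fin.last r) j‖ ^ 2
      = 1 := by
    have h := Matrix.mem_unitaryGroup_iff.mp V.2
    have h' := congrFun (congrFun h (Fin.last r)) (Fin.last r)
    simp only [Matrix.mul_apply, Matrix.star_apply, Matrix.one_apply_eq, Complex.star_def] at h'
    simp only [Complex.mul_conj'] at h'
    exact_mod_cast h'
  have hg : gdet (jacobiH (r + 1) 1 (r + 1 - t) h3 h4 (revU (r + 1) * V⁻¹ * revU (r + 1)))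
      = ∑ i : Fin (r + 1 - t), ‖(V : Matrix (Fin (r + 1)) (Fin (r + 1)) ℂ) (Fin.last r)
        (Fin.castLE h3 i).rev‖ ^ 2 := by
    simp only [gdet, Matrix.det_fin_one, Matrix.mul_apply, Matrix.conjTranspose_apply,
      Complex.re_sum, Complex.star_def, jacobiH, Matrix.submatrix_apply, rev_entry]
    refine Finset.sum_congr rfl fun j _ => ?_
    rw [Complex.conj_mul']
    norm_cast
    simp
  rw [hg, ← hfull]
  rw [sub_eq_iff_eq_add]
  let g : Fin (r + 1) → ℝ := fun j =>
    ‖(V : Matrix (Fin (r + 1)) (Fin (r + 1)) ℂ) (Fin.last r) j‖ ^ 2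
  change ∑ j, g j = ∑ i, g (Fin.castLE h3 i).rev + ∑ j, g (Fin.castLE h2 j)
  rw [add_comm (∑ i, g (Fin.castLE h3 i).rev)]
  have ht : t + (r + 1 - t) = r + 1 := by omega
  rw [← (finCongr ht).sum_comp g, Fin.sum_univ_add]
  congr 1
  rw [← Equiv.sum_comp Fin.revPerm]
  refine Finset.sum_congr rfl fun i _ => ?_
  congr 1
  ext
  simp [Fin.val_rev]
  omega

lemma EL_main (k : ℕ) : ∀ (t r m : ℕ) (hm : m = r + k) (htr : t ≤ r) (μ : Measure (UG m))
    [μ.IsHaarMeasure] [IsProbabilityMeasure μ] (h1 : r ≤ m) (h2 : t ≤ m),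
    EL μ t r h1 h2 = ENNReal.ofReal (∑ i ∈ Finset.range k, ∑ j ∈ Finset.range t,
      1 / ((r : ℝ) + i - j)) := by
  induction k with
  | zero =>
    intro t r m hm hr μ _ _ h1 h2
    obtain rfl : m = r := by omega
    simp [EL_full]
  | succ k ih =>
    intro t r m hm hr μ _ _ h1 h2
    obtain rfl : m = (r + 1) + k := by omega
    rw [EL_rec hr μ h1 h2 (by omega) (by omega) (by omega),
      EL_swap hr _ _ _ (by omega) (by omega), EL_one t (r + 1 - t) (r + 1) (by omega) (by omega),
      ih t (r + 1) _ rfl (by omega), ← ENNReal.ofReal_add, Finset.sum_range_succ']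
    · congr 1
      congr 1
      · refine Finset.sum_congr rfl fun i _ => Finset.sum_congr rfl fun j _ => ?_
        push_cast
        congr 1
        ring
      · rw [← Finset.sum_range_reflect]
        refine Finset.sum_congr rfl fun j hj => ?_
        rw [Finset.mem_range] at hj
        congr 1
        rw [Nat.cast_sub (by omega), Nat.sub_sub, Nat.cast_sub (by omega)]
        push_cast
        ring
    · refine Finset.sum_nonneg fun i _ => Finset.sum_nonneg fun j hj => ?_
      rw [Finset.mem_range] at hj
      have : (j : ℝ) ≤ r := by exact_mod_cast (by omega : j ≤ r)
      have : (0 : ℝ) ≤ ((r + 1 : ℕ) : ℝ) + i - j := by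
        push_cast
        have : (0 : ℝ) ≤ i := by positivity
        linarith
      positivity
    · exact Finset.sum_nonneg fun i _ => by positivity

lemma harmonic_diff (a k : ℕ) :
    ((harmonic (a + k) : ℚ) : ℝ) = harmonic a + ∑ i ∈ Finset.range k, 1 / ((a : ℝ) + 1 + i) := by
  induction k with
  | zero => simp
  | succ k ih =>
    rw [← add_assoc, harmonic_succ, Finset.sum_range_succ]
    push_cast
    rw [ih, one_div, show (a : ℝ) + k + 1 = a + 1 + k by ring]
    ring

end main

end JacobiAux

/-- **Mean log-determinant of the Jacobi matrix.** If `mt ≤ mr` and `mt + mr ≤ m`,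
then `det (Hᴴ H) > 0` almost surely and
`E[ln det (Hᴴ H)] = − Σ_{j<mt} Σ_{k<m−mr} 1/(mr + k − j)`; equivalently
`E[ln det (Hᴴ H)] = Σ_{j<mt} (H_{mr−j−1} − H_{m−j−1})` with `H_n` the `n`-th harmonic
number (the digamma expression `Σ_j (ψ(mr−j) − ψ(m−j))`). The expectation is over
the Haar probability measure on the unitary group `U(m)`. -/
theorem jacobi_mean_log_det
    (m mt mr : ℕ) (hm : 0 < m) (hmt : 0 < mt) (hmr : 0 < mr)
    (h1 : mt ≤ mr) (h2 : mt + mr ≤ m)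
    (μ : Measure (Matrix.unitaryGroup (Fin m) ℂ))
    [μ.IsHaarMeasure] [IsProbabilityMeasure μ] :
    (∀ᵐ U ∂μ, 0 < (Matrix.det
        ((jacobiH m mt mr (le_trans (Nat.le_add_left mr mt) h2)
            (le_trans (Nat.le_add_right mt mr) h2) U)ᴴ *
          jacobiH m mt mr (le_trans (Nat.le_add_left mr mt) h2)
            (le_trans (Nat.le_add_right mt mr) h2) U)).re) ∧
    (∫ U, Real.log ((Matrix.det
        ((jacobiH m mt mr (le_trans (Nat.le_add_left mr mt) h2)
            (le_trans (Nat.le_add_right mt mr) h2) U)ᴴ *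
          jacobiH m mt mr (le_trans (Nat.le_add_left mr mt) h2)
            (le_trans (Nat.le_add_right mt mr) h2) U)).re) ∂μ
      = -(∑ j ∈ Finset.range mt, ∑ k ∈ Finset.range (m - mr),
          1 / ((mr : ℝ) + k - j))) ∧
    (∫ U, Real.log ((Matrix.det
        ((jacobiH m mt mr (le_trans (Nat.le_add_left mr mt) h2)
            (le_trans (Nat.le_add_right mt mr) h2) U)ᴴ *
          jacobiH m mt mr (le_trans (Nat.le_add_left mr mt) h2)
            (le_trans (Nat.le_add_right mt mr) h2) U)).re) ∂μ
      = ∑ j ∈ Finset.range mt,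
          ((harmonic (mr - j - 1) : ℝ) - (harmonic (m - j - 1) : ℝ))) := by
  have hr : mr ≤ m := le_trans (Nat.le_add_left mr mt) h2
  have ht : mt ≤ m := le_trans (Nat.le_add_right mt mr) h2
  change (∀ᵐ U ∂μ, 0 < JacobiAux.gdet (jacobiH m mt mr hr ht U)) ∧
    (∫ U, Real.log (JacobiAux.gdet (jacobiH m mt mr hr ht U)) ∂μ = _) ∧
    (∫ U, Real.log (JacobiAux.gdet (jacobiH m mt mr hr ht U)) ∂μ = _)
  have hEL := JacobiAux.EL_main (m - mr) mt mr m (by omega) h1 μ hr ht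
  rw [Finset.sum_comm] at hEL
  set S : ℝ := ∑ j ∈ Finset.range mt, ∑ k ∈ Finset.range (m - mr), 1 / ((mr : ℝ) + k - j) with hS
  have hSnn : 0 ≤ S := by
    refine Finset.sum_nonneg fun j hj => Finset.sum_nonneg fun k _ => ?_
    rw [Finset.mem_range] at hj
    have h3 : (j : ℝ) ≤ mr := by exact_mod_cast (by omega : j ≤ mr)
    have h4 : (0 : ℝ) ≤ (mr : ℝ) + k - j := by
      have : (0 : ℝ) ≤ k := by positivity
      linarith
    positivity
  have hmeas : Measurable (fun U => JacobiAux.gdet (jacobiH m mt mr hr ht U)) :=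
    (JacobiAux.continuous_gdet hr ht).measurable
  have hpos : ∀ᵐ U ∂μ, 0 < JacobiAux.gdet (jacobiH m mt mr hr ht U) := by
    have hfin : JacobiAux.EL μ mt mr hr ht ≠ ⊤ := by rw [hEL]; exact ENNReal.ofReal_ne_top
    have hae := ae_lt_top (JacobiAux.measurable_nl.comp hmeas) hfin
    filter_upwards [hae] with U hU
    by_contra hc
    simp [JacobiAux.nl, not_lt.mp hc] at hU
  have hint : ∫ U, Real.log (JacobiAux.gdet (jacobiH m mt mr hr ht U)) ∂μ = -S := by
    have hle : ∀ U, JacobiAux.gdet (jacobiH m mt mr hr ht U) ≤ 1 := fun U =>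
      JacobiAux.gdet_le_one mt (m - mr) mr m (by omega) h1 hr ht U
    have h5 : ∫ U, -Real.log (JacobiAux.gdet (jacobiH m mt mr hr ht U)) ∂μ = S := by
      rw [integral_eq_lintegral_of_nonneg_ae]
      · have h6 : ∫⁻ U, ENNReal.ofReal (-Real.log (JacobiAux.gdet (jacobiH m mt mr hr ht U))) ∂μ
            = JacobiAux.EL μ mt mr hr ht := by
          refine lintegral_congr_ae ?_
          filter_upwards [hpos] with U hU
          rw [JacobiAux.nl, if_neg hU.not_ge]
        rw [h6, hEL, ENNReal.toReal_ofReal hSnn]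
      · refine Filter.Eventually.of_forall fun U => ?_
        have := Real.log_nonpos (JacobiAux.gdet_nonneg _) (hle U)
        simpa using this
      · exact (Real.measurable_log.comp hmeas).neg.aestronglyMeasurable
    rw [integral_neg] at h5
    linarith
  refine ⟨hpos, hint, ?_⟩
  rw [hint, hS, ← Finset.sum_neg_distrib]
  refine Finset.sum_congr rfl fun j hj => ?_
  rw [Finset.mem_range] at hj
  have h7 := JacobiAux.harmonic_diff (mr - j - 1) (m - mr)
  rw [show mr - j - 1 + (m - mr) = m - j - 1 by omega] at h7
  rw [h7]
  have h8 : ((mr - j - 1 : ℕ) : ℝ) = (mr : ℝ) - j - 1 := by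
    rw [Nat.sub_sub, Nat.cast_sub (by omega)]
    push_cast
    ring
  rw [h8]
  have h9 : ∀ k : ℕ, (mr : ℝ) - j - 1 + 1 + k = mr + k - j := fun k => by ring
  simp only [h9]
  ring
end

section
/- Let m, m_t, m_r be positive integers with m_r ≥ m_t, m_t ≤ m, m_r ≤ m and m_t + m_r > m. Let U be Haar distributed on the unitary group U(m) and let H be the upper-left m_r×m_t block of U. Then for every s ≥ 0, E[ln det(I_{m_t} + s·HᴴH)] ≤ (m_t + m_r − m)·ln(1 + s) + (m − m_r)·ln(1 + s·(m − m_t)/m). -/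
open MeasureTheory Matrix

section
open scoped ComplexOrder

theorem aux_log_det {k : ℕ} (M : Matrix (Fin k) (Fin k) ℂ) (hM : M.PosDef) (c : ℝ) (hc : 0 < c) :
    0 < M.det.re ∧ Real.log M.det.re ≤ k * Real.log c + M.trace.re / c - k := by
  have hd : M.det.re = ∏ i, hM.1.eigenvalues i := by
    rw [hM.1.det_eq_prod_eigenvalues, ← Complex.ofReal_re (∏ i, hM.1.eigenvalues i)]
    push_cast; rfl
  have ht : M.trace.re = ∑ i, hM.1.eigenvalues i := by
    rw [hM.1.trace_eq_sum_eigenvalues, ← Complex.ofReal_re (∑ i, hM.1.eigenvalues i)]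
    push_cast; rfl
  have hp := hM.eigenvalues_pos
  refine ⟨hd ▸ Finset.prod_pos fun i _ => hp i, ?_⟩
  rw [hd, ht, Real.log_prod (fun i _ => (hp i).ne'), Finset.sum_div]
  have : (k : ℝ) * Real.log c + ∑ i, hM.1.eigenvalues i / c - k
      = ∑ i : Fin k, (Real.log c + hM.1.eigenvalues i / c - 1) := by
    simp [Finset.sum_add_distrib, Finset.sum_sub_distrib]
  rw [this]
  refine Finset.sum_le_sum fun i _ => ?_
  have := Real.log_le_sub_one_of_pos (div_pos (hp i) hc)
  rw [Real.log_div (hp i).ne' hc.ne'] at this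
  linarith

end

theorem aux_affine {Ω : Type*} [MeasurableSpace Ω] (μ : Measure Ω) [IsProbabilityMeasure μ]
    (f : Ω → ℝ) (hf : Integrable f μ) (a b k t c : ℝ) :
    Integrable (fun x => a + (b + (k - t * f x) / c - k)) μ ∧
    ∫ x, (a + (b + (k - t * f x) / c - k)) ∂μ = a + (b + (k - t * ∫ x, f x ∂μ) / c - k) := by
  have e : (fun x => a + (b + (k - t * f x) / c - k))
      = fun x => (a + b + k / c - k) + (-(t / c)) * f x := by
    funext x; ring
  rw [e]
  refine ⟨(integrable_const _).add (hf.const_mul _), ?_⟩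
  rw [integral_add (integrable_const _) (hf.const_mul _), integral_const_mul]
  simp
  ring

noncomputable def splitE {a m : ℕ} (h : a ≤ m) : Fin a ⊕ Fin (m - a) ≃ Fin m :=
  finSumFinEquiv.trans (finCongr (by omega))

theorem splitE_inl {a m : ℕ} (h : a ≤ m) (i : Fin a) : splitE h (Sum.inl i) = Fin.castLE h i := by
  ext; simp [splitE]

theorem sum_split {a m : ℕ} (h : a ≤ m) (f : Fin m → ℂ) :
    ∑ i, f i = ∑ i, f (Fin.castLE h i) + ∑ i, f (splitE h (Sum.inr i)) := by
  rw [← (splitE h).sum_comp, Fintype.sum_sum_type]; simp [splitE_inl]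

section
variable {m mt mr : ℕ}

noncomputable def blockC (hr : mr ≤ m) (ht : mt ≤ m) (U : Matrix.unitaryGroup (Fin m) ℂ) :
    Matrix (Fin (m - mr)) (Fin mt) ℂ :=
  (U : Matrix (Fin m) (Fin m) ℂ).submatrix (fun i => splitE hr (Sum.inr i)) (Fin.castLE ht)

noncomputable def blockD (hr : mr ≤ m) (ht : mt ≤ m) (U : Matrix.unitaryGroup (Fin m) ℂ) :
    Matrix (Fin (m - mr)) (Fin (m - mt)) ℂ :=
  (U : Matrix (Fin m) (Fin m) ℂ).submatrix (fun i => splitE hr (Sum.inr i))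
    (fun i => splitE ht (Sum.inr i))

theorem HH_eq (hr : mr ≤ m) (ht : mt ≤ m) (U : Matrix.unitaryGroup (Fin m) ℂ) :
    (jacobiH m mt mr hr ht U)ᴴ * jacobiH m mt mr hr ht U
      = 1 - (blockC hr ht U)ᴴ * blockC hr ht U := by
  rw [eq_sub_iff_add_eq]
  ext i j
  have h := congrFun (congrFun (Matrix.mem_unitaryGroup_iff'.mp U.2) (Fin.castLE ht i))
    (Fin.castLE ht j)
  rw [Matrix.mul_apply, sum_split hr] at h
  simpa [Matrix.mul_apply, jacobiH, blockC, Matrix.one_apply, Matrix.star_apply] using h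

theorem DD_eq (hr : mr ≤ m) (ht : mt ≤ m) (U : Matrix.unitaryGroup (Fin m) ℂ) :
    blockD hr ht U * (blockD hr ht U)ᴴ = 1 - blockC hr ht U * (blockC hr ht U)ᴴ := by
  rw [eq_sub_iff_add_eq']
  ext i j
  have h := congrFun (congrFun (Matrix.mem_unitaryGroup_iff.mp U.2) (splitE hr (Sum.inr i)))
    (splitE hr (Sum.inr j))
  rw [Matrix.mul_apply, sum_split ht] at h
  simpa [Matrix.mul_apply, blockD, blockC, Matrix.one_apply, Matrix.star_apply] using h

theorem trace_CC (hr : mr ≤ m) (ht : mt ≤ m) (U : Matrix.unitaryGroup (Fin m) ℂ) :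
    (blockC hr ht U * (blockC hr ht U)ᴴ).trace
      = ((∑ i : Fin (m - mr), ∑ j : Fin mt,
        ‖(U : Matrix (Fin m) (Fin m) ℂ) (splitE hr (Sum.inr i)) (Fin.castLE ht j)‖ ^ 2 : ℝ) : ℂ) := by
  push_cast
  simp [Matrix.trace, Matrix.mul_apply, blockC, Complex.mul_conj']

open scoped ComplexOrder in
theorem pointwise_bound (hr : mr ≤ m) (ht : mt ≤ m) (U : Matrix.unitaryGroup (Fin m) ℂ)
    (s c : ℝ) (hs : 0 ≤ s) (hc : 0 < c) :
    Real.log ((Matrix.det ((1 : Matrix (Fin mt) (Fin mt) ℂ) +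
      (s : ℂ) • ((jacobiH m mt mr hr ht U)ᴴ * jacobiH m mt mr hr ht U))).re)
    ≤ mt * Real.log (1 + s) + ((m - mr : ℕ) * Real.log c +
      ((m - mr : ℕ) - s / (1 + s) * ∑ i : Fin (m - mr), ∑ j : Fin mt,
        ‖(U : Matrix (Fin m) (Fin m) ℂ) (splitE hr (Sum.inr i)) (Fin.castLE ht j)‖ ^ 2) / c
        - (m - mr : ℕ)) := by
  set C := blockC hr ht U with hC
  set t : ℝ := s / (1 + s) with htdef
  have h1s : (0:ℝ) < 1 + s := by linarith
  have hts : (1 + s) * t = s := by rw [htdef]; field_simp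
  have ht0 : 0 ≤ t := by positivity
  have ht1 : 0 < 1 - t := by
    rw [htdef, sub_pos, div_lt_one h1s]; linarith
  have hmat : (1 : Matrix (Fin mt) (Fin mt) ℂ) +
      (s : ℂ) • ((jacobiH m mt mr hr ht U)ᴴ * jacobiH m mt mr hr ht U)
      = ((1 + s : ℝ) : ℂ) • (1 - Cᴴ * ((t : ℂ) • C)) := by
    rw [HH_eq, ← hC, Matrix.mul_smul, smul_sub, smul_sub, smul_smul, ← Complex.ofReal_mul, hts,
      Complex.ofReal_add, add_smul]
    simp; abel
  have hdet : (Matrix.det ((1 : Matrix (Fin mt) (Fin mt) ℂ) +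
      (s : ℂ) • ((jacobiH m mt mr hr ht U)ᴴ * jacobiH m mt mr hr ht U))).re
      = (1 + s) ^ mt * (1 - (t : ℂ) • (C * Cᴴ)).det.re := by
    rw [hmat, Matrix.det_smul, Matrix.det_one_sub_mul_comm, Matrix.smul_mul, Fintype.card_fin,
      ← Complex.ofReal_pow, Complex.re_ofReal_mul]
  have hPD : (1 - (t : ℂ) • (C * Cᴴ)).PosDef := by
    have : 1 - (t : ℂ) • (C * Cᴴ) = ((1 - t : ℝ) : ℂ) • (1 : Matrix (Fin (m - mr)) (Fin (m - mr)) ℂ)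
        + (t : ℂ) • (blockD hr ht U * (blockD hr ht U)ᴴ) := by
      rw [DD_eq, ← hC, Complex.ofReal_sub, sub_smul, smul_sub]; simp
    rw [this]
    refine Matrix.PosDef.add_posSemidef ?_ ?_
    · exact Matrix.PosDef.one.smul (by exact_mod_cast ht1)
    · exact (Matrix.posSemidef_self_mul_conjTranspose _).smul (by exact_mod_cast ht0)
  obtain ⟨hpos, hle⟩ := aux_log_det _ hPD c hc
  rw [hdet, Real.log_mul (by positivity) hpos.ne', Real.log_pow]
  rw [Matrix.trace_sub, Matrix.trace_smul, hC, trace_CC, smul_eq_mul, ← Complex.ofReal_mul,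
    Matrix.trace_one, Complex.sub_re, Complex.ofReal_re, Fintype.card_fin, Complex.natCast_re] at hle
  rw [hC]
  linarith

theorem entry_cont (i j : Fin m) : Continuous (fun U : Matrix.unitaryGroup (Fin m) ℂ =>
    ‖(U : Matrix (Fin m) (Fin m) ℂ) i j‖ ^ 2) := by
  have : Continuous (fun U : Matrix.unitaryGroup (Fin m) ℂ =>
    (U : Matrix (Fin m) (Fin m) ℂ) i j) := continuous_subtype_val.matrix_elem i j
  exact this.norm.pow 2

theorem entry_int (μ : Measure (Matrix.unitaryGroup (Fin m) ℂ)) [IsProbabilityMeasure μ]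
    (i j : Fin m) : Integrable (fun U : Matrix.unitaryGroup (Fin m) ℂ =>
    ‖(U : Matrix (Fin m) (Fin m) ℂ) i j‖ ^ 2) μ := by
  refine Integrable.of_bound (entry_cont i j).aestronglyMeasurable 1 (ae_of_all _ fun U => ?_)
  have := entry_norm_bound_of_unitary U.2 i j
  rw [Real.norm_of_nonneg (by positivity)]
  exact pow_le_one₀ (norm_nonneg _) this

noncomputable def permU (σ : Equiv.Perm (Fin m)) : Matrix.unitaryGroup (Fin m) ℂ :=
  ⟨σ.permMatrix ℂ, by
    rw [Matrix.mem_unitaryGroup_iff, Matrix.star_eq_conjTranspose, Matrix.conjTranspose_permMatrix,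
      ← Matrix.permMatrix_mul]; simp⟩

theorem permU_mul (σ : Equiv.Perm (Fin m)) (U : Matrix.unitaryGroup (Fin m) ℂ) (i j : Fin m) :
    ((permU σ * U : Matrix.unitaryGroup (Fin m) ℂ) : Matrix (Fin m) (Fin m) ℂ) i j
      = (U : Matrix (Fin m) (Fin m) ℂ) (σ i) j := by
  simp [permU, Equiv.Perm.permMatrix, PEquiv.toMatrix_toPEquiv_mul]

theorem entry_mean (hm : 0 < m) (μ : Measure (Matrix.unitaryGroup (Fin m) ℂ)) [μ.IsHaarMeasure]
    [IsProbabilityMeasure μ] (i j : Fin m) :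
    ∫ U, ‖(U : Matrix (Fin m) (Fin m) ℂ) i j‖ ^ 2 ∂μ = 1 / m := by
  have hsame : ∀ k : Fin m, ∫ U, ‖(U : Matrix (Fin m) (Fin m) ℂ) k j‖ ^ 2 ∂μ
      = ∫ U, ‖(U : Matrix (Fin m) (Fin m) ℂ) i j‖ ^ 2 ∂μ := by
    intro k
    rw [← integral_mul_left_eq_self (μ := μ) (fun U : Matrix.unitaryGroup (Fin m) ℂ =>
      ‖(U : Matrix (Fin m) (Fin m) ℂ) i j‖ ^ 2) (permU (Equiv.swap i k))]
    simp only [permU_mul, Equiv.swap_apply_left]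
  have hsum : ∑ k : Fin m, ∫ U, ‖(U : Matrix (Fin m) (Fin m) ℂ) k j‖ ^ 2 ∂μ = 1 := by
    rw [← integral_finsetSum _ (fun k _ => entry_int μ k j)]
    have : ∀ U : Matrix.unitaryGroup (Fin m) ℂ,
        ∑ k : Fin m, ‖(U : Matrix (Fin m) (Fin m) ℂ) k j‖ ^ 2 = 1 := by
      intro U
      have h := congrFun (congrFun (Matrix.mem_unitaryGroup_iff'.mp U.2) j) j
      rw [Matrix.mul_apply] at h
      simp only [Matrix.star_apply, Matrix.one_apply_eq, RCLike.star_def, Complex.conj_mul'] at h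
      exact_mod_cast h
    simp [this]
  simp only [hsame] at hsum
  simp at hsum
  have : (m : ℝ) ≠ 0 := by positivity
  field_simp
  linarith
end

/-- **Upper bound on the ergodic capacity when `mt + mr > m`.**
If `mr ≥ mt`, `mt ≤ m`, `mr ≤ m` and `mt + mr > m`, then for every `s ≥ 0`,
`E[ln det (I + s · Hᴴ H)] ≤ (mt + mr − m)·ln (1 + s) + (m − mr)·ln (1 + s·(m − mt)/m)`,
the expectation being over the Haar probability measure on the unitary group `U(m)`. -/
theorem jacobi_ergodic_capacity_upper_bound_overfull
    (m mt mr : ℕ) (hm : 0 < m) (hmt : 0 < mt) (hmr : 0 < mr)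
    (h1 : mt ≤ mr) (ht : mt ≤ m) (hr : mr ≤ m) (hsum : m < mt + mr)
    (μ : Measure (Matrix.unitaryGroup (Fin m) ℂ))
    [μ.IsHaarMeasure] [IsProbabilityMeasure μ]
    (s : ℝ) (hs : 0 ≤ s) :
    ergodicCapacity m mt mr hr ht s μ
      ≤ ((mt : ℝ) + mr - m) * Real.log (1 + s) +
        ((m : ℝ) - mr) * Real.log (1 + s * ((m : ℝ) - mt) / m) := by
  have hm' : (0 : ℝ) < m := by exact_mod_cast hm
  have h1s : (0 : ℝ) < 1 + s := by linarith
  have ht' : (mt : ℝ) ≤ m := by exact_mod_cast ht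
  have hr' : (mr : ℝ) ≤ m := by exact_mod_cast hr
  have hsum' : (m : ℝ) < mt + mr := by exact_mod_cast hsum
  have hd : 0 ≤ s * ((m : ℝ) - mt) / m :=
    div_nonneg (mul_nonneg hs (by linarith)) hm'.le
  set d : ℝ := 1 + s * ((m : ℝ) - mt) / m with hddef
  have hd0 : 0 < d := by linarith
  have hc : 0 < d / (1 + s) := by positivity
  unfold ergodicCapacity
  by_cases hI : Integrable (fun U : Matrix.unitaryGroup (Fin m) ℂ =>
      Real.log ((Matrix.det ((1 : Matrix (Fin mt) (Fin mt) ℂ) +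
      (s : ℂ) • ((jacobiH m mt mr hr ht U)ᴴ * jacobiH m mt mr hr ht U))).re)) μ
  swap
  · rw [integral_undef hI]
    have e1 : 0 ≤ Real.log (1 + s) := Real.log_nonneg (by linarith)
    have e2 : 0 ≤ Real.log d := Real.log_nonneg (by linarith)
    exact add_nonneg (mul_nonneg (by linarith) e1) (mul_nonneg (by linarith) e2)
  have hS : Integrable (fun U : Matrix.unitaryGroup (Fin m) ℂ =>
      ∑ i : Fin (m - mr), ∑ j : Fin mt,
        ‖(U : Matrix (Fin m) (Fin m) ℂ) (splitE hr (Sum.inr i)) (Fin.castLE ht j)‖ ^ 2) μ :=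
    integrable_finsetSum _ fun i _ => integrable_finsetSum _ fun j _ => entry_int μ _ _
  have hSm : ∫ U, (∑ i : Fin (m - mr), ∑ j : Fin mt,
        ‖(U : Matrix (Fin m) (Fin m) ℂ) (splitE hr (Sum.inr i)) (Fin.castLE ht j)‖ ^ 2) ∂μ
        = ((m : ℝ) - mr) * (mt * (1 / m)) := by
    rw [integral_finsetSum _ fun i _ => integrable_finsetSum _ fun j _ => entry_int μ _ _]
    simp_rw [integral_finsetSum _ fun j _ => entry_int μ _ _, entry_mean hm]
    simp [Nat.cast_sub hr]
  obtain ⟨hA, hB⟩ := aux_affine μ _ hS (mt * Real.log (1 + s))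
    ((m - mr : ℕ) * Real.log (d / (1 + s))) ((m - mr : ℕ) : ℝ) (s / (1 + s)) (d / (1 + s))
  have hle := integral_mono hI hA (fun U => pointwise_bound hr ht U s (d / (1 + s)) hs hc)
  refine hle.trans (le_of_eq ?_)
  rw [hB, hSm]
  rw [Nat.cast_sub hr, Real.log_div hd0.ne' h1s.ne']
  have key : (((m : ℝ) - mr) - s / (1 + s) * (((m : ℝ) - mr) * (mt * (1 / m)))) / (d / (1 + s))
      = (m : ℝ) - mr := by
    rw [div_eq_iff hc.ne', hddef]
    field_simp
    ring
  rw [key]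
  ring
end
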